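/- There exists a standard solution family: a function f : ℂ × ℂ → ℂ such that (1) for every λ ∈ ℂ the map z ↦ f(z,λ) is entire and satisfies ∂²f/∂z²(z,λ) = (z³ + λ)·f(z,λ) for all z ∈ ℂ, (2) for every z ∈ ℂ the map λ ↦ f(z,λ) is entire, and (3) for every ε > 0 and every compact set L ⊂ ℂ there exist C > 0 and R > 0 such that |f(z,λ)·z^{3/4}·e^{(2/5)·z^{5/2}} − 1| ≤ C·|z|^{−1/2} whenever λ ∈ L, |z| ≥ R and |arg z| ≤ 3π/5 − ε. -/

import Mathlib

open Complex

/-! In the Liouville–Green variables `η = z ^ (5/2)` and `u = z ^ (3/4) * exp (2/5 * η) * f`, the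
equation `f'' = (z ^ 3 + l) f` becomes `u'' = 4/5 * u' + q u` with `q = O(|η| ^ (-6/5))`. On a
sector `|arg η| < π - δ`, cut off near the origin, the Volterra equation expressing `u (∞) = 1` is a
contraction: its Neumann series is holomorphic in `(η, l)` and is `1 + O(|η| ^ (-1/5))`. The jet of
this series at one point is the initial datum of an entire solution, which depends holomorphically
on `l`. The Wronskian of two solutions `u` is a multiple of `exp (4/5 * η)`, so it vanishes when
both tend to `1` along the positive axis with bounded derivative; hence the solution is unique, and
the local families in `l` agree. Rotating `η` by angles `|θ| < π / 2` enlarges the sector to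
`|arg z| < 3π / 5`. -/

namespace CubicOscillator

open Set Filter Topology MeasureTheory Asymptotics

section ParametricIntegral

variable {α : Type*} [MeasurableSpace α] {m : Measure α} {U : Set ℂ} {F : ℂ → α → ℂ} {g : α → ℝ}
  {x₀ : ℂ}

theorem aestronglyMeasurable_deriv_param (hU : U ∈ 𝓝 x₀)
    (hmeas : ∀ x ∈ U, AEStronglyMeasurable (F x) m)
    (hdiff : ∀ᵐ s ∂m, DifferentiableAt ℂ (F · s) x₀) :
    AEStronglyMeasurable (fun s => deriv (F · s) x₀) m := by
  classical
  refine aestronglyMeasurable_of_tendsto_ae (𝓝[≠] x₀)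
    (f := fun x s => if x ∈ U then slope (F · s) x₀ x else 0) (fun x => ?_) ?_
  · by_cases hx : x ∈ U
    · simp only [hx, if_true, slope_def_field]
      exact ((hmeas x hx).sub (hmeas x₀ (mem_of_mem_nhds hU))).mul_const _
    · simpa only [hx, if_false] using aestronglyMeasurable_const
  · filter_upwards [hdiff] with s hs
    refine hs.hasDerivAt.tendsto_slope.congr' ?_
    filter_upwards [mem_nhdsWithin_of_mem_nhds hU] with x hx
    rw [if_pos hx]

theorem hasDerivAt_integral_of_holomorphic (hU : IsOpen U) (hx₀ : x₀ ∈ U)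
    (hmeas : ∀ x ∈ U, AEStronglyMeasurable (F x) m)
    (hdiff : ∀ᵐ s ∂m, DifferentiableOn ℂ (F · s) U)
    (hbound : ∀ᵐ s ∂m, ∀ x ∈ U, ‖F x s‖ ≤ g s) (hg : Integrable g m) :
    Integrable (fun s => deriv (F · s) x₀) m ∧
      HasDerivAt (fun x => ∫ s, F x s ∂m) (∫ s, deriv (F · s) x₀ ∂m) x₀ := by
  obtain ⟨R, hR, hball⟩ := Metric.isOpen_iff.1 hU x₀ hx₀
  have closedBall_subset {x : ℂ} (hx : x ∈ Metric.ball x₀ (R / 2)) :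
      Metric.closedBall x (R / 4) ⊆ U := by
    refine (Metric.closedBall_subset_ball' ?_).trans hball
    linarith [Metric.mem_ball.1 hx]
  have cauchy : ∀ᵐ s ∂m, ∀ x ∈ Metric.ball x₀ (R / 2), ‖deriv (F · s) x‖ ≤ g s / (R / 4) := by
    filter_upwards [hdiff, hbound] with s hs hgs x hx
    refine norm_deriv_le_of_forall_mem_sphere_norm_le (by positivity) ?_
      fun z hz => hgs z (closedBall_subset hx (Metric.sphere_subset_closedBall hz))
    exact (hs.mono (closedBall_subset hx)).diffContOnCl_ball subset_rfl
  refine hasDerivAt_integral_of_dominated_loc_of_deriv_le (bound := fun s => g s / (R / 4))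
    (Metric.ball_mem_nhds x₀ (half_pos hR)) ?_ ?_ ?_ cauchy (hg.div_const _) ?_
  · filter_upwards [hU.mem_nhds hx₀] using hmeas
  · exact hg.mono' (hmeas x₀ hx₀) (hbound.mono fun s hs => hs x₀ hx₀)
  · refine aestronglyMeasurable_deriv_param (hU.mem_nhds hx₀) hmeas ?_
    filter_upwards [hdiff] with s hs using hs.differentiableAt (hU.mem_nhds hx₀)
  · filter_upwards [hdiff] with s hs x hx
    have hxU : x ∈ U := closedBall_subset hx (Metric.mem_closedBall_self (by positivity))
    exact (hs.differentiableAt (hU.mem_nhds hxU)).hasDerivAt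

theorem differentiableOn_integral_of_holomorphic (hU : IsOpen U)
    (hmeas : ∀ x ∈ U, AEStronglyMeasurable (F x) m)
    (hdiff : ∀ᵐ s ∂m, DifferentiableOn ℂ (F · s) U)
    (hbound : ∀ᵐ s ∂m, ∀ x ∈ U, ‖F x s‖ ≤ g s) (hg : Integrable g m) :
    DifferentiableOn ℂ (fun x => ∫ s, F x s ∂m) U := fun _ hx =>
  (hasDerivAt_integral_of_holomorphic hU hx hmeas hdiff hbound hg).2.differentiableAt
    |>.differentiableWithinAt

end ParametricIntegral

section HalfLineLaplace

/-- Sets containing, with each point, the horizontal ray to its right. -/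
def ShiftStable (Ω : Set ℂ) : Prop :=
  ∀ η ∈ Ω, ∀ s : ℝ, 0 ≤ s → η + s ∈ Ω

/-- The Laplace transform at `ν` of `g` restricted to the horizontal ray from `η` to `η + ∞`. -/
noncomputable def halfLineLaplace (ν : ℂ) (g : ℂ → ℂ) (η : ℂ) : ℂ :=
  ∫ s in Ioi (0 : ℝ), exp (-ν * s) * g (η + s)

theorem norm_exp_neg_mul_ofReal_le_one {ν : ℂ} (hν : 0 ≤ ν.re) {s : ℝ} (hs : 0 ≤ s) :
    ‖exp (-ν * s)‖ ≤ 1 := by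
  rw [norm_exp, Real.exp_le_one_iff, re_mul_ofReal, neg_re]
  exact mul_nonpos_of_nonpos_of_nonneg (neg_nonpos.2 hν) hs

theorem norm_exp_neg_mul_mul_le {ν : ℂ} (hν : 0 ≤ ν.re) {s : ℝ} (hs : 0 ≤ s) {w : ℂ} {c : ℝ}
    (hw : ‖w‖ ≤ c) : ‖exp (-ν * s) * w‖ ≤ c := by
  rw [norm_mul]
  exact (mul_le_of_le_one_left (norm_nonneg w) (norm_exp_neg_mul_ofReal_le_one hν hs)).trans hw

variable {Ω : Set ℂ} {ν η : ℂ} {g : ℂ → ℂ} {b : ℝ → ℝ}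

theorem norm_halfLineLaplace_le (hν : 0 ≤ ν.re) (hb : IntegrableOn b (Ioi 0))
    (hgb : ∀ s : ℝ, 0 < s → ‖g (η + s)‖ ≤ b s) :
    ‖halfLineLaplace ν g η‖ ≤ ∫ s in Ioi (0 : ℝ), b s := by
  refine norm_integral_le_of_norm_le hb ?_
  filter_upwards [ae_restrict_mem measurableSet_Ioi] with s hs
  exact norm_exp_neg_mul_mul_le hν (le_of_lt hs) (hgb s hs)

theorem aestronglyMeasurable_halfLineLaplace (ν : ℂ) (hΩ : ShiftStable Ω)
    (hg : ContinuousOn g Ω) (hη : η ∈ Ω) :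
    AEStronglyMeasurable (fun s : ℝ => exp (-ν * s) * g (η + s)) (volume.restrict (Ioi 0)) := by
  have hray : ContinuousOn (fun s : ℝ => g (η + s)) (Ioi 0) :=
    hg.comp (by fun_prop) fun s hs => hΩ η hη s (le_of_lt hs)
  have hexp : Continuous fun s : ℝ => exp (-ν * s) := by fun_prop
  exact (hexp.continuousOn.mul hray).aestronglyMeasurable measurableSet_Ioi

theorem integrableOn_halfLineLaplace (hν : 0 ≤ ν.re) (hΩ : ShiftStable Ω)
    (hg : ContinuousOn g Ω) (hb : IntegrableOn b (Ioi 0)) (hη : η ∈ Ω)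
    (hgb : ∀ s : ℝ, 0 < s → ‖g (η + s)‖ ≤ b s) :
    IntegrableOn (fun s : ℝ => exp (-ν * s) * g (η + s)) (Ioi 0) := by
  refine hb.mono' (aestronglyMeasurable_halfLineLaplace ν hΩ hg hη) ?_
  filter_upwards [ae_restrict_mem measurableSet_Ioi] with s hs
  exact norm_exp_neg_mul_mul_le hν (le_of_lt hs) (hgb s hs)

theorem integral_deriv_exp_mul (hν : 0 ≤ ν.re) (hΩ : IsOpen Ω) (hshift : ShiftStable Ω)
    (hg : DifferentiableOn ℂ g Ω) (hb : IntegrableOn b (Ioi 0)) (hη : η ∈ Ω)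
    (hgb : ∀ s : ℝ, 0 < s → ‖g (η + s)‖ ≤ b s)
    (hint : IntegrableOn (fun s : ℝ => exp (-ν * s) * deriv g (η + s)) (Ioi 0)) :
    ∫ s in Ioi (0 : ℝ), exp (-ν * s) * deriv g (η + s) =
      ν * halfLineLaplace ν g η - g η := by
  set I : ℝ → ℂ := fun s => exp (-ν * s) * g (η + s)
  set J : ℝ → ℂ := fun s => exp (-ν * s) * deriv g (η + s)
  have hI : IntegrableOn I (Ioi 0) :=
    integrableOn_halfLineLaplace hν hshift hg.continuousOn hb hη hgb
  have hderiv : ∀ s ∈ Ici (0 : ℝ), HasDerivAt I (J s - ν * I s) s := by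
    intro s hs
    have hexp : HasDerivAt (fun w : ℂ => exp (-ν * w)) (exp (-ν * s) * -ν) s := by
      simpa using ((hasDerivAt_id (s : ℂ)).const_mul (-ν)).cexp
    have hgs : HasDerivAt g (deriv g (η + s)) (η + s) :=
      (hg.differentiableAt (hΩ.mem_nhds (hshift η hη s hs))).hasDerivAt
    refine ((hexp.mul (hgs.comp_const_add η s)).comp_ofReal).congr_deriv ?_
    ring
  have hJI : IntegrableOn (fun s => J s - ν * I s) (Ioi 0) := hint.sub (hI.const_mul ν)
  have hlim : Tendsto I atTop (𝓝 0) :=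
    tendsto_zero_of_hasDerivAt_of_integrableOn_Ioi (fun s hs => hderiv s (mem_Ici_of_Ioi hs)) hJI hI
  have hFTC := integral_Ioi_of_hasDerivAt_of_tendsto' hderiv hJI hlim
  have hI0 : I 0 = g η := by simp [I]
  rw [integral_sub hint (hI.const_mul ν), integral_const_mul, hI0] at hFTC
  rw [halfLineLaplace]
  linear_combination hFTC

theorem hasDerivAt_halfLineLaplace (hν : 0 ≤ ν.re) (hΩ : IsOpen Ω) (hshift : ShiftStable Ω)
    (hg : DifferentiableOn ℂ g Ω) (hb : IntegrableOn b (Ioi 0))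
    (hgb : ∀ η ∈ Ω, ∀ s : ℝ, 0 < s → ‖g (η + s)‖ ≤ b s) (hη : η ∈ Ω) :
    HasDerivAt (halfLineLaplace ν g) (ν * halfLineLaplace ν g η - g η) η := by
  have hpos : ∀ᵐ s ∂volume.restrict (Ioi (0 : ℝ)), 0 < s := ae_restrict_mem measurableSet_Ioi
  have hderiv (s : ℝ) :
      deriv (fun ζ => exp (-ν * s) * g (ζ + s)) η = exp (-ν * s) * deriv g (η + s) := by
    rw [deriv_const_mul_field, deriv_comp_add_const]
  obtain ⟨hint, h⟩ := hasDerivAt_integral_of_holomorphic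
    (F := fun ζ (s : ℝ) => exp (-ν * s) * g (ζ + s)) hΩ hη
    (fun ζ hζ => aestronglyMeasurable_halfLineLaplace ν hshift hg.continuousOn hζ)
    (hpos.mono fun s hs => (hg.comp (by fun_prop) fun ζ hζ => hshift ζ hζ s hs.le).const_mul _)
    (hpos.mono fun s hs ζ hζ => norm_exp_neg_mul_mul_le hν hs.le (hgb ζ hζ s hs)) hb
  simp only [hderiv] at hint h
  rwa [integral_deriv_exp_mul hν hΩ hshift hg hb hη (hgb η hη) hint] at h

end HalfLineLaplace

section PowerIntegral

variable {x a : ℝ}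

theorem integrableOn_add_rpow (hx : 0 < x) (ha : 0 < a) :
    IntegrableOn (fun s : ℝ => (x + s) ^ (-(a + 1))) (Ioi 0) := by
  simpa only [add_comm x] using
    integrableOn_add_rpow_Ioi_of_lt (c := 0) (m := x) (by linarith) (by linarith)

theorem integral_add_rpow (hx : 0 < x) (ha : 0 < a) :
    ∫ s in Ioi (0 : ℝ), (x + s) ^ (-(a + 1)) = x ^ (-a) / a := by
  have hshift := (measurePreserving_add_left volume x).setIntegral_preimage_emb
    (measurableEmbedding_addLeft x) (fun t => t ^ (-(a + 1))) (Ioi x)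
  rw [preimage_const_add_Ioi, sub_self] at hshift
  rw [hshift, integral_Ioi_rpow_of_lt (by linarith) hx, neg_add, neg_add_cancel_right, div_neg,
    neg_div, neg_neg]

end PowerIntegral

section LinearODE

/-- `u` is a holomorphic solution on `Ω` of the linear equation `u'' = μ u' + q u`. -/
structure IsSolutionOn (Ω : Set ℂ) (μ : ℂ) (q u : ℂ → ℂ) : Prop where
  differentiableOn : DifferentiableOn ℂ u Ω
  deriv_deriv : ∀ η ∈ Ω, deriv (deriv u) η = μ * deriv u η + q η * u η

/-- The Wronskian of two functions of a complex variable. -/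
noncomputable def wronskian (u v : ℂ → ℂ) (η : ℂ) : ℂ :=
  u η * deriv v η - deriv u η * v η

variable {Ω : Set ℂ} {μ : ℂ} {q u v : ℂ → ℂ} {η η₀ : ℂ}

namespace IsSolutionOn

theorem of_hasDerivAt {u' : ℂ → ℂ} (hΩ : IsOpen Ω) (hu : ∀ η ∈ Ω, HasDerivAt u (u' η) η)
    (hu' : ∀ η ∈ Ω, HasDerivAt u' (μ * u' η + q η * u η) η) : IsSolutionOn Ω μ q u where
  differentiableOn η hη := (hu η hη).differentiableAt.differentiableWithinAt
  deriv_deriv η hη := by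
    have h : deriv u =ᶠ[𝓝 η] u' := by
      filter_upwards [hΩ.mem_nhds hη] with ζ hζ using (hu ζ hζ).deriv
    rw [h.deriv_eq, (hu' η hη).deriv, (hu η hη).deriv]

theorem hasDerivAt (hu : IsSolutionOn Ω μ q u) (hΩ : IsOpen Ω) (hη : η ∈ Ω) :
    HasDerivAt u (deriv u η) η :=
  (hu.differentiableOn.differentiableAt (hΩ.mem_nhds hη)).hasDerivAt

theorem hasDerivAt_deriv (hu : IsSolutionOn Ω μ q u) (hΩ : IsOpen Ω) (hη : η ∈ Ω) :
    HasDerivAt (deriv u) (μ * deriv u η + q η * u η) η := by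
  rw [← hu.deriv_deriv η hη]
  exact ((hu.differentiableOn.deriv hΩ).differentiableAt (hΩ.mem_nhds hη)).hasDerivAt

theorem mono {Ω' : Set ℂ} (hu : IsSolutionOn Ω μ q u) (h : Ω' ⊆ Ω) : IsSolutionOn Ω' μ q u :=
  ⟨hu.differentiableOn.mono h, fun η hη => hu.deriv_deriv η (h hη)⟩

theorem linear_combination (hu : IsSolutionOn Ω μ q u) (hv : IsSolutionOn Ω μ q v)
    (hΩ : IsOpen Ω) (α β : ℂ) :
    IsSolutionOn Ω μ q fun η => α * u η + β * v η := by
  refine .of_hasDerivAt hΩ (u' := fun η => α * deriv u η + β * deriv v η)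
    (fun η hη => ((hu.hasDerivAt hΩ hη).const_mul α).add ((hv.hasDerivAt hΩ hη).const_mul β))
    fun η hη => ?_
  refine (((hu.hasDerivAt_deriv hΩ hη).const_mul α).add
    ((hv.hasDerivAt_deriv hΩ hη).const_mul β)).congr_deriv ?_
  ring

theorem wronskian_eq_exp (hu : IsSolutionOn Ω μ q u) (hv : IsSolutionOn Ω μ q v)
    (hΩ : IsOpen Ω) (hconn : IsPreconnected Ω) :
    ∃ K : ℂ, ∀ η ∈ Ω, wronskian u v η = K * exp (μ * η) := by
  have hderiv : ∀ η ∈ Ω, HasDerivAt (fun η => wronskian u v η * exp (-μ * η)) 0 η := by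
    intro η hη
    have hexp : HasDerivAt (fun η => exp (-μ * η)) (exp (-μ * η) * (-μ * 1)) η :=
      ((hasDerivAt_id η).const_mul (-μ)).cexp
    refine ((((hu.hasDerivAt hΩ hη).mul (hv.hasDerivAt_deriv hΩ hη)).sub
      ((hu.hasDerivAt_deriv hΩ hη).mul (hv.hasDerivAt hΩ hη))).mul hexp).congr_deriv ?_
    simp only [Pi.sub_apply, Pi.mul_apply]
    ring
  obtain ⟨K, hK⟩ := hΩ.exists_is_const_of_deriv_eq_zero hconn
    (fun η hη => (hderiv η hη).differentiableAt.differentiableWithinAt)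
    (fun η hη => (hderiv η hη).deriv)
  refine ⟨K, fun η hη => ?_⟩
  rw [← hK η hη, mul_assoc, ← exp_add, neg_mul, neg_add_cancel, exp_zero, mul_one]

theorem wronskian_eq_zero_of_eq_zero (hu : IsSolutionOn Ω μ q u) (hv : IsSolutionOn Ω μ q v)
    (hΩ : IsOpen Ω) (hconn : IsPreconnected Ω) (hη₀ : η₀ ∈ Ω) (h : wronskian u v η₀ = 0) :
    ∀ η ∈ Ω, wronskian u v η = 0 := by
  obtain ⟨K, hK⟩ := hu.wronskian_eq_exp hv hΩ hconn
  have hK₀ : K = 0 := by simpa [hK η₀ hη₀] using h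
  intro η hη
  rw [hK η hη, hK₀, zero_mul]

theorem wronskian_eq_zero_of_isBigO (hu : IsSolutionOn Ω μ q u) (hv : IsSolutionOn Ω μ q v)
    (hΩ : IsOpen Ω) (hconn : IsPreconnected Ω) (hμ : 0 < μ.re)
    (hlarge : ∀ᶠ x : ℝ in atTop, (x : ℂ) ∈ Ω)
    (hbdd : (fun x : ℝ => wronskian u v x) =O[atTop] (fun _ => (1 : ℝ))) :
    ∀ η ∈ Ω, wronskian u v η = 0 := by
  obtain ⟨K, hK⟩ := hu.wronskian_eq_exp hv hΩ hconn
  have hexp : Tendsto (fun x : ℝ => exp (-(μ * x))) atTop (𝓝 0) := by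
    rw [tendsto_exp_nhds_zero_iff]
    simpa only [neg_re, re_mul_ofReal, neg_mul, id] using
      tendsto_id.const_mul_atTop_of_neg (neg_neg_of_pos hμ)
  have hprod : (fun x : ℝ => wronskian u v x * exp (-(μ * x))) =o[atTop] (fun _ => (1 : ℝ)) := by
    simpa only [mul_one] using hbdd.mul_isLittleO ((isLittleO_one_iff ℝ).2 hexp)
  have hconst : (fun x : ℝ => wronskian u v x * exp (-(μ * x))) =ᶠ[atTop] fun _ => K := by
    filter_upwards [hlarge] with x hx
    rw [hK x hx, mul_assoc, ← exp_add, add_neg_cancel, exp_zero, mul_one]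
  have hK₀ : K = 0 := tendsto_nhds_unique tendsto_const_nhds
    (((isLittleO_one_iff ℝ).1 hprod).congr' hconst)
  intro η hη
  rw [hK η hη, hK₀, zero_mul]

end IsSolutionOn

theorem exists_eq_const_mul_of_wronskian_eq_zero (hΩ : IsOpen Ω) (hconn : IsPreconnected Ω)
    (hu : DifferentiableOn ℂ u Ω) (hv : DifferentiableOn ℂ v Ω) (hu₀ : ∀ η ∈ Ω, u η ≠ 0)
    (hW : ∀ η ∈ Ω, wronskian u v η = 0) : ∃ c : ℂ, ∀ η ∈ Ω, v η = c * u η := by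
  have hderiv : ∀ η ∈ Ω, HasDerivAt (fun η => v η / u η) 0 η := by
    intro η hη
    have hnhds := hΩ.mem_nhds hη
    refine ((hv.differentiableAt hnhds).hasDerivAt.div (hu.differentiableAt hnhds).hasDerivAt
      (hu₀ η hη)).congr_deriv (div_eq_zero_iff.2 (Or.inl ?_))
    rw [← hW η hη, wronskian]
    ring
  obtain ⟨c, hc⟩ := hΩ.exists_is_const_of_deriv_eq_zero hconn
    (fun η hη => (hderiv η hη).differentiableAt.differentiableWithinAt)
    (fun η hη => (hderiv η hη).deriv)
  exact ⟨c, fun η hη => by rw [← hc η hη, div_mul_cancel₀ _ (hu₀ η hη)]⟩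

theorem IsSolutionOn.eqOn_of_jet_eq (hu : IsSolutionOn Ω μ q u) (hv : IsSolutionOn Ω μ q v)
    (hΩ : IsOpen Ω) (hconn : IsPreconnected Ω) (hu₀ : ∀ η ∈ Ω, u η ≠ 0) (hη₀ : η₀ ∈ Ω)
    (hval : v η₀ = u η₀) (hder : deriv v η₀ = deriv u η₀) : EqOn v u Ω := by
  have hW : wronskian u v η₀ = 0 := by
    rw [wronskian, hval, hder, mul_comm, sub_self]
  obtain ⟨c, hc⟩ := exists_eq_const_mul_of_wronskian_eq_zero hΩ hconn hu.differentiableOn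
    hv.differentiableOn hu₀ (hu.wronskian_eq_zero_of_eq_zero hv hΩ hconn hη₀ hW)
  have hc₁ : c = 1 := (mul_eq_right₀ (hu₀ η₀ hη₀)).1 ((hc η₀ hη₀).symm.trans hval)
  intro η hη
  rw [hc η hη, hc₁, one_mul]

theorem IsSolutionOn.eqOn_of_tendsto_one (hu : IsSolutionOn Ω μ q u)
    (hv : IsSolutionOn Ω μ q v) (hΩ : IsOpen Ω) (hconn : IsPreconnected Ω) (hμ : 0 < μ.re)
    (hlarge : ∀ᶠ x : ℝ in atTop, (x : ℂ) ∈ Ω) (hu₀ : ∀ η ∈ Ω, u η ≠ 0)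
    (hu_lim : Tendsto (fun x : ℝ => u x) atTop (𝓝 1))
    (hu_bdd : (fun x : ℝ => deriv u x) =O[atTop] (fun _ => (1 : ℝ)))
    (hv_lim : Tendsto (fun x : ℝ => v x) atTop (𝓝 1))
    (hv_bdd : (fun x : ℝ => deriv v x) =O[atTop] (fun _ => (1 : ℝ))) : EqOn v u Ω := by
  have hbdd : (fun x : ℝ => wronskian u v x) =O[atTop] (fun _ => (1 : ℝ)) := by
    simpa only [mul_one, wronskian] using
      ((hu_lim.isBigO_one ℝ).mul hv_bdd).sub (hu_bdd.mul (hv_lim.isBigO_one ℝ))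
  obtain ⟨c, hc⟩ := exists_eq_const_mul_of_wronskian_eq_zero hΩ hconn hu.differentiableOn
    hv.differentiableOn hu₀ (hu.wronskian_eq_zero_of_isBigO hv hΩ hconn hμ hlarge hbdd)
  have hc₁ : c = 1 := by
    have hlim : Tendsto (fun x : ℝ => v x) atTop (𝓝 (c * 1)) :=
      (hu_lim.const_mul c).congr' (hlarge.mono fun x hx => (hc x hx).symm)
    simpa using tendsto_nhds_unique hlim hv_lim
  intro η hη
  rw [hc η hη, hc₁, one_mul]

end LinearODE

section Volterra

/-- A potential `q η l` on `Ω × B`, decaying like `‖η‖ ^ (-(a + 1))` along horizontal rays, for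
which the integral equation associated with `u'' = μ u' + q u` and `u (∞) = 1` is contractive. Since
`|1 - exp (-μ s)| ≤ 2`, the condition `contractive` bounds the norm of the integral operator by
`1 / 4`. -/
structure VolterraData (Ω B : Set ℂ) (q : ℂ → ℂ → ℂ) (μ : ℂ) (a M r : ℝ) : Prop where
  isOpen_domain : IsOpen Ω
  isOpen_param : IsOpen B
  shiftStable : ShiftStable Ω
  differentiableOn_domain : ∀ l ∈ B, DifferentiableOn ℂ (fun η => q η l) Ω
  differentiableOn_param : ∀ η ∈ Ω, DifferentiableOn ℂ (fun l => q η l) B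
  exponent_pos : 0 < a
  const_nonneg : 0 ≤ M
  radius_pos : 0 < r
  radius_le_norm : ∀ η ∈ Ω, r ≤ ‖η‖
  norm_potential_le : ∀ η ∈ Ω, ∀ l ∈ B, ∀ s : ℝ, 0 ≤ s →
    ‖q (η + s) l‖ ≤ M * a * (‖η‖ + s) ^ (-(a + 1))
  re_pos : 0 < μ.re
  contractive : 8 * M * r ^ (-a) ≤ ‖μ‖

/-- Functions on `Ω × B` that are holomorphic in each variable and bounded by `K`. -/
structure IsSepHolomorphic (Ω B : Set ℂ) (K : ℝ) (F : ℂ → ℂ → ℂ) : Prop where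
  differentiableOn_domain : ∀ l ∈ B, DifferentiableOn ℂ (fun η => F η l) Ω
  differentiableOn_param : ∀ η ∈ Ω, DifferentiableOn ℂ (fun l => F η l) B
  norm_le : ∀ η ∈ Ω, ∀ l ∈ B, ‖F η l‖ ≤ K

/-- The Volterra operator `F ↦ ∫₀^∞ (1 - exp (-μ s)) / μ * q (η + s) * F (η + s) ds`, which
inverts `u'' - μ u'` on functions vanishing at `+∞`. -/
noncomputable def volterra (μ : ℂ) (q F : ℂ → ℂ → ℂ) (η l : ℂ) : ℂ :=
  (halfLineLaplace 0 (fun ζ => q ζ l * F ζ l) η - halfLineLaplace μ (fun ζ => q ζ l * F ζ l) η) / μ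

/-- The terms of the Neumann series of `1 - volterra μ q`, applied to the constant `1`. -/
noncomputable def neumannTerm (μ : ℂ) (q : ℂ → ℂ → ℂ) : ℕ → ℂ → ℂ → ℂ
  | 0 => fun _ _ => 1
  | n + 1 => volterra μ q (neumannTerm μ q n)

/-- The Neumann series solving `u = 1 + volterra μ q u`. -/
noncomputable def volterraSolution (μ : ℂ) (q : ℂ → ℂ → ℂ) (η l : ℂ) : ℂ :=
  ∑' n : ℕ, neumannTerm μ q n η l

variable {Ω B : Set ℂ} {q F : ℂ → ℂ → ℂ} {μ ν η l : ℂ} {a M r K : ℝ}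

theorem hasSum_one_div_four_pow : HasSum (fun n : ℕ => (1 / 4 : ℝ) ^ n) (4 / 3) := by
  convert hasSum_geometric_of_lt_one (r := 1 / 4) (by norm_num) (by norm_num) using 1
  norm_num

namespace VolterraData

theorem rpow_norm_le (D : VolterraData Ω B q μ a M r) (hη : η ∈ Ω) :
    ‖η‖ ^ (-a) ≤ r ^ (-a) :=
  Real.rpow_le_rpow_of_nonpos D.radius_pos (D.radius_le_norm η hη)
    (neg_nonpos.2 D.exponent_pos.le)

theorem norm_pos (D : VolterraData Ω B q μ a M r) (hη : η ∈ Ω) : 0 < ‖η‖ :=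
  D.radius_pos.trans_le (D.radius_le_norm η hη)

theorem differentiableOn_potential_mul (D : VolterraData Ω B q μ a M r)
    (hF : IsSepHolomorphic Ω B K F) (hl : l ∈ B) :
    DifferentiableOn ℂ (fun ζ => q ζ l * F ζ l) Ω :=
  (D.differentiableOn_domain l hl).mul (hF.differentiableOn_domain l hl)

theorem norm_potential_mul_le (D : VolterraData Ω B q μ a M r) (hF : IsSepHolomorphic Ω B K F)
    (hη : η ∈ Ω) (hl : l ∈ B) {s : ℝ} (hs : 0 ≤ s) :
    ‖q (η + s) l * F (η + s) l‖ ≤ K * (M * a * (‖η‖ + s) ^ (-(a + 1))) := by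
  rw [norm_mul, mul_comm]
  have hFs := hF.norm_le _ (D.shiftStable η hη s hs) l hl
  exact mul_le_mul hFs (D.norm_potential_le η hη l hl s hs) (norm_nonneg _)
    ((norm_nonneg _).trans hFs)

theorem norm_potential_mul_le_uniform (D : VolterraData Ω B q μ a M r)
    (hF : IsSepHolomorphic Ω B K F) (hη : η ∈ Ω) (hl : l ∈ B) {s : ℝ} (hs : 0 ≤ s) :
    ‖q (η + s) l * F (η + s) l‖ ≤ K * (M * a * (r + s) ^ (-(a + 1))) := by
  refine (D.norm_potential_mul_le hF hη hl hs).trans ?_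
  have hK : 0 ≤ K := (norm_nonneg _).trans (hF.norm_le η hη l hl)
  have hMa : 0 ≤ M * a := mul_nonneg D.const_nonneg D.exponent_pos.le
  have hrs : 0 < r + s := add_pos_of_pos_of_nonneg D.radius_pos hs
  gcongr K * (M * a * ?_)
  exact Real.rpow_le_rpow_of_nonpos hrs (by linarith [D.radius_le_norm η hη])
    (by linarith [D.exponent_pos])

theorem integrableOn_bound (D : VolterraData Ω B q μ a M r) (K : ℝ) :
    IntegrableOn (fun s => K * (M * a * (r + s) ^ (-(a + 1)))) (Ioi 0) :=
  ((integrableOn_add_rpow D.radius_pos D.exponent_pos).const_mul _).const_mul _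

theorem integrableOn_laplace (D : VolterraData Ω B q μ a M r) (hF : IsSepHolomorphic Ω B K F)
    (hν : 0 ≤ ν.re) (hη : η ∈ Ω) (hl : l ∈ B) :
    IntegrableOn (fun s : ℝ => exp (-ν * s) * (q (η + s) l * F (η + s) l)) (Ioi 0) :=
  integrableOn_halfLineLaplace (g := fun ζ => q ζ l * F ζ l) hν D.shiftStable
    (D.differentiableOn_potential_mul hF hl).continuousOn (D.integrableOn_bound K) hη
    fun _ hs => D.norm_potential_mul_le_uniform hF hη hl hs.le

theorem norm_laplace_le (D : VolterraData Ω B q μ a M r) (hF : IsSepHolomorphic Ω B K F)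
    (hν : 0 ≤ ν.re) (hη : η ∈ Ω) (hl : l ∈ B) :
    ‖halfLineLaplace ν (fun ζ => q ζ l * F ζ l) η‖ ≤ K * (M * ‖η‖ ^ (-a)) := by
  have hint := integrableOn_add_rpow (D.norm_pos hη) D.exponent_pos
  refine (norm_halfLineLaplace_le hν ((hint.const_mul (M * a)).const_mul K)
    fun s hs => D.norm_potential_mul_le hF hη hl hs.le).trans_eq ?_
  rw [integral_const_mul, integral_const_mul, integral_add_rpow (D.norm_pos hη) D.exponent_pos]
  field_simp [D.exponent_pos.ne']

theorem hasDerivAt_laplace (D : VolterraData Ω B q μ a M r) (hF : IsSepHolomorphic Ω B K F)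
    (hν : 0 ≤ ν.re) (hη : η ∈ Ω) (hl : l ∈ B) :
    HasDerivAt (halfLineLaplace ν fun ζ => q ζ l * F ζ l)
      (ν * halfLineLaplace ν (fun ζ => q ζ l * F ζ l) η - q η l * F η l) η :=
  hasDerivAt_halfLineLaplace hν D.isOpen_domain D.shiftStable
    (D.differentiableOn_potential_mul hF hl)
    (D.integrableOn_bound K) (fun _ hζ _ hs => D.norm_potential_mul_le_uniform hF hζ hl hs.le) hη

theorem differentiableOn_laplace_param (D : VolterraData Ω B q μ a M r)
    (hF : IsSepHolomorphic Ω B K F) (hν : 0 ≤ ν.re) (hη : η ∈ Ω) :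
    DifferentiableOn ℂ (fun l => halfLineLaplace ν (fun ζ => q ζ l * F ζ l) η) B := by
  have hpos : ∀ᵐ s ∂volume.restrict (Ioi (0 : ℝ)), 0 < s := ae_restrict_mem measurableSet_Ioi
  refine differentiableOn_integral_of_holomorphic D.isOpen_param
    (fun l hl => aestronglyMeasurable_halfLineLaplace ν D.shiftStable
      (D.differentiableOn_potential_mul hF hl).continuousOn hη)
    (hpos.mono fun s hs => ?_)
    (hpos.mono fun s hs l hl => norm_exp_neg_mul_mul_le hν hs.le
      (D.norm_potential_mul_le_uniform hF hη hl hs.le)) (D.integrableOn_bound K)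
  have hmem := D.shiftStable η hη s hs.le
  exact ((D.differentiableOn_param _ hmem).mul (hF.differentiableOn_param _ hmem)).const_mul _

theorem ne_zero (D : VolterraData Ω B q μ a M r) : μ ≠ 0 := by
  rintro rfl
  exact D.re_pos.ne' zero_re

theorem hasDerivAt_volterra (D : VolterraData Ω B q μ a M r) (hF : IsSepHolomorphic Ω B K F)
    (hη : η ∈ Ω) (hl : l ∈ B) :
    HasDerivAt (fun η => volterra μ q F η l)
      (-halfLineLaplace μ (fun ζ => q ζ l * F ζ l) η) η := by
  refine (((D.hasDerivAt_laplace hF zero_re.ge hη hl).sub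
    (D.hasDerivAt_laplace hF D.re_pos.le hη hl)).div_const μ).congr_deriv ?_
  field_simp [D.ne_zero]
  ring

theorem norm_volterra_le (D : VolterraData Ω B q μ a M r) (hF : IsSepHolomorphic Ω B K F)
    (hη : η ∈ Ω) (hl : l ∈ B) :
    ‖volterra μ q F η l‖ ≤ 2 * K * M / ‖μ‖ * ‖η‖ ^ (-a) := by
  rw [volterra, norm_div, div_le_iff₀ (norm_pos_iff.2 D.ne_zero)]
  refine (norm_sub_le_of_le (D.norm_laplace_le hF zero_re.ge hη hl)
    (D.norm_laplace_le hF D.re_pos.le hη hl)).trans_eq ?_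
  field_simp [norm_ne_zero_iff.2 D.ne_zero]
  ring

theorem isSepHolomorphic_volterra (D : VolterraData Ω B q μ a M r)
    (hF : IsSepHolomorphic Ω B K F) : IsSepHolomorphic Ω B (K / 4) (volterra μ q F) where
  differentiableOn_domain l hl η hη :=
    (D.hasDerivAt_volterra hF hη hl).differentiableAt.differentiableWithinAt
  differentiableOn_param η hη :=
    ((D.differentiableOn_laplace_param hF zero_re.ge hη).sub
      (D.differentiableOn_laplace_param hF D.re_pos.le hη)).div_const μ
  norm_le η hη l hl := by
    have hK : 0 ≤ K := (norm_nonneg _).trans (hF.norm_le η hη l hl)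
    have hM := D.const_nonneg
    have hμ : 0 < ‖μ‖ := norm_pos_iff.2 D.ne_zero
    calc ‖volterra μ q F η l‖ ≤ 2 * K * M / ‖μ‖ * ‖η‖ ^ (-a) := D.norm_volterra_le hF hη hl
      _ ≤ 2 * K * M / ‖μ‖ * r ^ (-a) := by gcongr ?_ * ?_; exact D.rpow_norm_le hη
      _ = K / 4 * (8 * M * r ^ (-a)) / ‖μ‖ := by ring
      _ ≤ K / 4 := by
        rw [div_le_iff₀ hμ]
        gcongr
        exact D.contractive

theorem isSepHolomorphic_neumannTerm (D : VolterraData Ω B q μ a M r) (n : ℕ) :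
    IsSepHolomorphic Ω B ((1 / 4) ^ n) (neumannTerm μ q n) := by
  induction n with
  | zero => exact ⟨fun _ _ => differentiableOn_const 1, fun _ _ => differentiableOn_const 1,
      fun _ _ _ _ => by simp [neumannTerm]⟩
  | succ n ih =>
    rw [pow_succ, mul_one_div]
    exact D.isSepHolomorphic_volterra ih

theorem isSepHolomorphic_volterraSolution (D : VolterraData Ω B q μ a M r) :
    IsSepHolomorphic Ω B (4 / 3) (volterraSolution μ q) where
  differentiableOn_domain l hl :=
    differentiableOn_tsum_of_summable_norm hasSum_one_div_four_pow.summable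
      (fun n => (D.isSepHolomorphic_neumannTerm n).differentiableOn_domain l hl) D.isOpen_domain
      fun n η hη => (D.isSepHolomorphic_neumannTerm n).norm_le η hη l hl
  differentiableOn_param η hη :=
    differentiableOn_tsum_of_summable_norm hasSum_one_div_four_pow.summable
      (fun n => (D.isSepHolomorphic_neumannTerm n).differentiableOn_param η hη) D.isOpen_param
      fun n l hl => (D.isSepHolomorphic_neumannTerm n).norm_le η hη l hl
  norm_le η hη l hl := tsum_of_norm_bounded hasSum_one_div_four_pow
    fun n => (D.isSepHolomorphic_neumannTerm n).norm_le η hη l hl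

theorem hasSum_laplace_neumannTerm (D : VolterraData Ω B q μ a M r) (hν : 0 ≤ ν.re) (hη : η ∈ Ω)
    (hl : l ∈ B) :
    HasSum (fun n => halfLineLaplace ν
        (fun ζ => q ζ l * neumannTerm μ q n ζ l) η)
      (halfLineLaplace ν (fun ζ => q ζ l * volterraSolution μ q ζ l) η) := by
  have hint (n : ℕ) := D.integrableOn_laplace (D.isSepHolomorphic_neumannTerm n) hν hη hl
  have hsum : Summable fun n : ℕ => ∫ s in Ioi (0 : ℝ), ‖exp (-ν * s) *
      (q (η + s) l * neumannTerm μ q n (η + s) l)‖ := by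
    refine .of_nonneg_of_le (fun n => integral_nonneg fun _ => norm_nonneg _) (fun n => ?_)
      (hasSum_one_div_four_pow.summable.mul_right
        (∫ s in Ioi (0 : ℝ), M * a * (r + s) ^ (-(a + 1))))
    rw [← integral_const_mul]
    exact setIntegral_mono_on (hint n).norm (D.integrableOn_bound _) measurableSet_Ioi
      fun s hs => norm_exp_neg_mul_mul_le hν (le_of_lt hs)
        (D.norm_potential_mul_le_uniform (D.isSepHolomorphic_neumannTerm n) hη hl (le_of_lt hs))
  simpa only [halfLineLaplace, volterraSolution, tsum_mul_left] using
    hasSum_integral_of_summable_integral_norm hint hsum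

theorem volterraSolution_eq (D : VolterraData Ω B q μ a M r) (hη : η ∈ Ω) (hl : l ∈ B) :
    volterraSolution μ q η l = 1 + volterra μ q (volterraSolution μ q) η l := by
  have hsum : HasSum (fun n => neumannTerm μ q (n + 1) η l)
      (volterra μ q (volterraSolution μ q) η l) :=
    ((D.hasSum_laplace_neumannTerm zero_re.ge hη hl).sub
      (D.hasSum_laplace_neumannTerm D.re_pos.le hη hl)).div_const μ
  have hsummable : Summable fun n => neumannTerm μ q n η l :=
    (summable_nat_add_iff 1).1 hsum.summable
  rw [← hsum.tsum_eq]
  exact hsummable.tsum_eq_zero_add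

theorem hasDerivAt_volterraSolution (D : VolterraData Ω B q μ a M r) (hη : η ∈ Ω) (hl : l ∈ B) :
    HasDerivAt (fun η => volterraSolution μ q η l)
      (-halfLineLaplace μ (fun ζ => q ζ l * volterraSolution μ q ζ l) η) η := by
  refine ((D.hasDerivAt_volterra D.isSepHolomorphic_volterraSolution hη hl).const_add
    1).congr_of_eventuallyEq ?_
  filter_upwards [D.isOpen_domain.mem_nhds hη] with ζ hζ using D.volterraSolution_eq hζ hl

theorem isSolutionOn_volterraSolution (D : VolterraData Ω B q μ a M r) (hl : l ∈ B) :
    IsSolutionOn Ω μ (fun η => q η l) fun η => volterraSolution μ q η l := by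
  refine .of_hasDerivAt D.isOpen_domain (fun η hη => D.hasDerivAt_volterraSolution hη hl)
    fun η hη => (D.hasDerivAt_laplace D.isSepHolomorphic_volterraSolution D.re_pos.le
      hη hl).neg.congr_deriv ?_
  ring

theorem differentiableOn_deriv_volterraSolution_param (D : VolterraData Ω B q μ a M r)
    (hη : η ∈ Ω) : DifferentiableOn ℂ (fun l => deriv (fun η => volterraSolution μ q η l) η) B :=
  (D.differentiableOn_laplace_param D.isSepHolomorphic_volterraSolution D.re_pos.le hη).neg.congr
    fun _ hl => (D.hasDerivAt_volterraSolution hη hl).deriv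

theorem norm_volterraSolution_sub_one_le (D : VolterraData Ω B q μ a M r) (hη : η ∈ Ω)
    (hl : l ∈ B) : ‖volterraSolution μ q η l - 1‖ ≤ 2 * (4 / 3) * M / ‖μ‖ * ‖η‖ ^ (-a) := by
  rw [D.volterraSolution_eq hη hl, add_sub_cancel_left]
  exact D.norm_volterra_le D.isSepHolomorphic_volterraSolution hη hl

theorem volterraSolution_ne_zero (D : VolterraData Ω B q μ a M r) (hη : η ∈ Ω) (hl : l ∈ B) :
    volterraSolution μ q η l ≠ 0 := by
  have hT := (D.isSepHolomorphic_volterra D.isSepHolomorphic_volterraSolution).norm_le η hη l hl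
  intro h
  have hone : volterra μ q (volterraSolution μ q) η l = -1 := by
    linear_combination h - D.volterraSolution_eq hη hl
  norm_num [hone] at hT

theorem tendsto_volterraSolution (D : VolterraData Ω B q μ a M r) {ι : Type*} {p : Filter ι}
    {γ : ι → ℂ} (hγ : Tendsto (fun i => ‖γ i‖) p atTop) (hΩ : ∀ᶠ i in p, γ i ∈ Ω) (hl : l ∈ B) :
    Tendsto (fun i => volterraSolution μ q (γ i) l) p (𝓝 1) := by
  refine tendsto_iff_norm_sub_tendsto_zero.2 (squeeze_zero' (.of_forall fun _ => norm_nonneg _)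
    (hΩ.mono fun i hi => D.norm_volterraSolution_sub_one_le hi hl) ?_)
  simpa only [mul_zero, Function.comp_apply] using
    ((tendsto_rpow_neg_atTop D.exponent_pos).comp hγ).const_mul (2 * (4 / 3) * M / ‖μ‖)

theorem norm_deriv_volterraSolution_le (D : VolterraData Ω B q μ a M r) (hη : η ∈ Ω)
    (hl : l ∈ B) :
    ‖deriv (fun η => volterraSolution μ q η l) η‖ ≤ 4 / 3 * (M * r ^ (-a)) := by
  have hM := D.const_nonneg
  rw [(D.hasDerivAt_volterraSolution hη hl).deriv, norm_neg]
  refine (D.norm_laplace_le D.isSepHolomorphic_volterraSolution D.re_pos.le hη hl).trans ?_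
  gcongr 4 / 3 * (M * ?_)
  exact D.rpow_norm_le hη

theorem eqOn_volterraSolution_of_tendsto_one (D : VolterraData Ω B q μ a M r)
    (hconn : IsPreconnected Ω) (hlarge : ∀ᶠ x : ℝ in atTop, (x : ℂ) ∈ Ω) (hl : l ∈ B)
    {u : ℂ → ℂ} (hu : IsSolutionOn Ω μ (fun η => q η l) u)
    (hlim : Tendsto (fun x : ℝ => u x) atTop (𝓝 1))
    (hbdd : (fun x : ℝ => deriv u x) =O[atTop] fun _ => (1 : ℝ)) :
    EqOn u (fun η => volterraSolution μ q η l) Ω :=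
  (D.isSolutionOn_volterraSolution hl).eqOn_of_tendsto_one hu D.isOpen_domain hconn D.re_pos
    hlarge (fun _ hη => D.volterraSolution_ne_zero hη hl)
    (D.tendsto_volterraSolution (tendsto_norm_atTop_atTop.congr fun x => (norm_real x).symm)
      hlarge hl)
    (.of_bound _ (hlarge.mono fun x hx => (D.norm_deriv_volterraSolution_le hx hl).trans_eq
      (by rw [norm_one, mul_one])))
    hlim hbdd

end VolterraData

end Volterra

section PowerSeries

variable {a c : ℕ → ℂ} {V : ℂ → ℂ} {B : Set ℂ}

theorem summable_derivCoeff (ha : ∀ w : ℂ, Summable fun n => a n * w ^ n) (w : ℂ) :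
    Summable fun n : ℕ => (n + 1) * a (n + 1) * w ^ n := by
  set ρ : ℝ := ‖w‖ + 1
  have hρ : 0 < ρ := by positivity
  have hmajor : Summable fun n => ‖a (n + 1) * (2 * ρ : ℂ) ^ (n + 1)‖ :=
    (summable_nat_add_iff 1).2 (ha (2 * ρ)).norm
  refine .of_norm_bounded (hmajor.mul_right ρ⁻¹) fun n => ?_
  have hnat : ((n : ℝ) + 1) ≤ 2 ^ (n + 1) := by
    exact_mod_cast Nat.lt_two_pow_self.le
  have hw : ‖w‖ ≤ ρ := by linarith
  have hn : ‖((n : ℂ) + 1)‖ = n + 1 := by exact_mod_cast norm_natCast (n + 1)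
  rw [norm_mul, norm_mul, norm_mul, norm_pow, norm_pow, hn, norm_mul, Complex.norm_ofNat,
    norm_real, Real.norm_of_nonneg hρ.le]
  calc ((n : ℝ) + 1) * ‖a (n + 1)‖ * ‖w‖ ^ n ≤ 2 ^ (n + 1) * ‖a (n + 1)‖ * ρ ^ n := by gcongr
    _ = ‖a (n + 1)‖ * (2 * ρ) ^ (n + 1) * ρ⁻¹ := by
      rw [mul_pow, pow_succ ρ]
      field_simp

theorem hasDerivAt_tsum_mul_pow (ha : ∀ w : ℂ, Summable fun n => a n * w ^ n) (w : ℂ) :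
    HasDerivAt (fun w => ∑' n, a n * w ^ n) (∑' n : ℕ, (n + 1) * a (n + 1) * w ^ n) w := by
  set ρ : ℝ := ‖w‖ + 1
  have hw : w ∈ Metric.ball (0 : ℂ) ρ := by simp [ρ]
  have hbound (n : ℕ) (ζ : ℂ) (hζ : ζ ∈ Metric.ball (0 : ℂ) ρ) :
      ‖a n * ζ ^ n‖ ≤ ‖a n * (ρ : ℂ) ^ n‖ := by
    rw [norm_mul, norm_mul, norm_pow, norm_pow, norm_real, Real.norm_of_nonneg (by positivity)]
    gcongr
    exact (mem_ball_zero_iff.1 hζ).le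
  have hdiff (n : ℕ) : DifferentiableOn ℂ (fun ζ => a n * ζ ^ n) (Metric.ball 0 ρ) := by fun_prop
  have hsum := hasSum_deriv_of_summable_norm (ha ρ).norm hdiff Metric.isOpen_ball hbound hw
  have hderiv (n : ℕ) :
      deriv (fun ζ => a (n + 1) * ζ ^ (n + 1)) w = (n + 1) * a (n + 1) * w ^ n := by
    rw [deriv_const_mul_field, deriv_pow_field, Nat.add_sub_cancel, Nat.cast_add, Nat.cast_one]
    ring
  rw [← hasSum_nat_add_iff' 1] at hsum
  simp only [hderiv, Finset.range_one, Finset.sum_singleton, pow_zero, deriv_const, sub_zero]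
    at hsum
  rw [hsum.tsum_eq]
  exact ((differentiableOn_tsum_of_summable_norm (ha ρ).norm hdiff Metric.isOpen_ball
    hbound).differentiableAt (Metric.isOpen_ball.mem_nhds hw)).hasDerivAt

/-- Taylor coefficients of the solution of `u'' = (V + l) u` with `u = α`, `u' = β` at the centre,
where `c` is the sequence of Taylor coefficients of `V`. -/
noncomputable def solCoeff (c : ℕ → ℂ) (l α β : ℂ) : ℕ → ℂ
  | 0 => α
  | 1 => β
  | n + 2 => (l * solCoeff c l α β n + ∑ k : Fin (n + 1), solCoeff c l α β k * c (n - k)) /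
      ((n + 2) * (n + 1))

theorem solCoeff_add_two (c : ℕ → ℂ) (l α β : ℂ) (n : ℕ) :
    (n + 2) * (n + 1) * solCoeff c l α β (n + 2) = l * solCoeff c l α β n +
      ∑ k ∈ Finset.range (n + 1), solCoeff c l α β k * c (n - k) := by
  have hn : ((n : ℂ) + 2) * (n + 1) ≠ 0 := by exact_mod_cast (by positivity : (n + 2) * (n + 1) ≠ 0)
  rw [solCoeff, mul_div_cancel₀ _ hn, Finset.sum_range fun k => solCoeff c l α β k * c (n - k)]

theorem norm_solCoeff_add_two_le {l α β : ℂ} {ρ N T : ℝ} (hρ : 0 ≤ ρ) (n : ℕ)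
    (hN : ρ ^ 2 * (‖l‖ + ∑ k ∈ Finset.range (n + 1), ‖c k‖ * ρ ^ k) ≤ N)
    (hT : ∀ k ≤ n, ‖solCoeff c l α β k‖ * ρ ^ k ≤ T) :
    ((n : ℝ) + 2) * (n + 1) * (‖solCoeff c l α β (n + 2)‖ * ρ ^ (n + 2)) ≤ N * T := by
  set x := solCoeff c l α β
  have hT₀ : 0 ≤ T := (by positivity : (0 : ℝ) ≤ ‖x 0‖ * ρ ^ 0).trans (hT 0 n.zero_le)
  have hnorm : ((n : ℝ) + 2) * (n + 1) * ‖x (n + 2)‖ ≤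
      ‖l‖ * ‖x n‖ + ∑ k ∈ Finset.range (n + 1), ‖x k‖ * ‖c (n - k)‖ := by
    have hcast : ‖((n : ℂ) + 2) * (n + 1)‖ = ((n : ℝ) + 2) * (n + 1) := by
      exact_mod_cast norm_natCast ((n + 2) * (n + 1))
    rw [← hcast, ← norm_mul, solCoeff_add_two]
    refine (norm_add_le _ _).trans (add_le_add (norm_mul_le _ _) ((norm_sum_le _ _).trans_eq ?_))
    exact Finset.sum_congr rfl fun k _ => norm_mul _ _
  calc ((n : ℝ) + 2) * (n + 1) * (‖x (n + 2)‖ * ρ ^ (n + 2))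
      = ρ ^ 2 * ρ ^ n * (((n : ℝ) + 2) * (n + 1) * ‖x (n + 2)‖) := by ring
    _ ≤ ρ ^ 2 * ρ ^ n *
        (‖l‖ * ‖x n‖ + ∑ k ∈ Finset.range (n + 1), ‖x k‖ * ‖c (n - k)‖) := by gcongr
    _ = ρ ^ 2 * (‖l‖ * (‖x n‖ * ρ ^ n) + ∑ k ∈ Finset.range (n + 1),
        ‖c (n - k)‖ * ρ ^ (n - k) * (‖x k‖ * ρ ^ k)) := by
      rw [mul_assoc, mul_add, Finset.mul_sum]
      congr 2
      · ring
      · refine Finset.sum_congr rfl fun k hk => ?_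
        rw [← pow_sub_mul_pow ρ (Finset.mem_range_succ_iff.1 hk)]
        ring
    _ ≤ ρ ^ 2 * (‖l‖ * T + ∑ k ∈ Finset.range (n + 1), ‖c (n - k)‖ * ρ ^ (n - k) * T) := by
      gcongr with k hk
      · exact hT n le_rfl
      · exact hT k (Finset.mem_range_succ_iff.1 hk)
    _ = ρ ^ 2 * (‖l‖ + ∑ k ∈ Finset.range (n + 1), ‖c k‖ * ρ ^ k) * T := by
      rw [← Finset.sum_mul, ← Finset.sum_range_reflect (fun k => ‖c k‖ * ρ ^ k),
        add_tsub_cancel_right]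
      ring
    _ ≤ N * T := by gcongr

/-- Each of the first `N` steps of the recurrence costs at most a factor `N`; from then on the
denominator `(n + 2) * (n + 1)` absorbs it. -/
theorem norm_solCoeff_mul_pow_le {l α β : ℂ} {ρ : ℝ} {N : ℕ} (hρ : 0 ≤ ρ) (hN₁ : 1 ≤ N)
    (hN : ∀ n, ρ ^ 2 * (‖l‖ + ∑ k ∈ Finset.range n, ‖c k‖ * ρ ^ k) ≤ N) (n : ℕ) :
    ‖solCoeff c l α β n‖ * ρ ^ n ≤ (‖α‖ + ‖β‖ * ρ) * N ^ min n N := by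
  have hN₁' : (1 : ℝ) ≤ N := by exact_mod_cast hN₁
  induction n using Nat.strong_induction_on with
  | _ n ih =>
    match n with
    | 0 =>
      simp only [solCoeff, pow_zero, mul_one, Nat.zero_min]
      exact le_add_of_nonneg_right (by positivity)
    | 1 =>
      simp only [solCoeff, pow_one, min_eq_left hN₁]
      exact le_trans (by linarith [norm_nonneg α]) (le_mul_of_one_le_right (by positivity) hN₁')
    | n + 2 =>
      set S := ‖α‖ + ‖β‖ * ρ
      set b := ‖solCoeff c l α β (n + 2)‖ * ρ ^ (n + 2)
      have hstep : ((n : ℝ) + 2) * (n + 1) * b ≤ N * (S * N ^ min n N) :=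
        norm_solCoeff_add_two_le hρ n (hN (n + 1))
          fun k hk => (ih k (by omega)).trans (by gcongr)
      have hfactor {x : ℝ} (h : x ≤ n + 1) : x * b ≤ (n + 2) * (n + 1) * b := by
        gcongr
        nlinarith [(n.cast_nonneg : (0 : ℝ) ≤ n)]
      rcases le_total N (n + 1) with hle | hle
      · have hNb : N * b ≤ N * (S * N ^ N) :=
          (hfactor (by exact_mod_cast hle)).trans (hstep.trans (by gcongr; exact min_le_right n N))
        rw [min_eq_right (by omega)]
        exact le_of_mul_le_mul_left hNb (by positivity)
      · calc b = 1 * b := (one_mul b).symm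
          _ ≤ N * (S * N ^ min n N) := (hfactor (by simp)).trans hstep
          _ = S * N ^ (min n N + 1) := by ring
          _ ≤ S * N ^ min (n + 2) N := by gcongr; omega

theorem exists_summable_bound_solCoeff (hc : ∀ w : ℂ, Summable fun n => c n * w ^ n)
    (α β : ℂ) (Λ : ℝ) (w : ℂ) : ∃ b : ℕ → ℝ, Summable b ∧
      ∀ l : ℂ, ‖l‖ ≤ Λ → ∀ n, ‖solCoeff c l α β n * w ^ n‖ ≤ b n := by
  set ρ : ℝ := 2 * ‖w‖
  have hρ : 0 ≤ ρ := by positivity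
  have hcρ : Summable fun n => ‖c n‖ * ρ ^ n := by
    simpa only [norm_mul, norm_pow, norm_real, Real.norm_of_nonneg hρ] using (hc ρ).norm
  obtain ⟨N, hN⟩ := exists_nat_ge (max 1 (ρ ^ 2 * (Λ + ∑' n, ‖c n‖ * ρ ^ n)))
  have hN₁ : 1 ≤ N := by exact_mod_cast (le_max_left _ _).trans hN
  refine ⟨fun n => (‖α‖ + ‖β‖ * ρ) * N ^ N * (1 / 2) ^ n,
    summable_geometric_two.mul_left _, fun l hl n => ?_⟩
  have hpartial (m : ℕ) : ρ ^ 2 * (‖l‖ + ∑ k ∈ Finset.range m, ‖c k‖ * ρ ^ k) ≤ N := by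
    refine le_trans ?_ ((le_max_right _ _).trans hN)
    gcongr
    exact hcρ.sum_le_tsum _ fun k _ => by positivity
  have hN₁' : (1 : ℝ) ≤ N := by exact_mod_cast hN₁
  calc ‖solCoeff c l α β n * w ^ n‖ = ‖solCoeff c l α β n‖ * ρ ^ n * (1 / 2) ^ n := by
        rw [norm_mul, norm_pow, mul_assoc, ← mul_pow, mul_one_div,
          mul_div_cancel_left₀ _ two_ne_zero]
    _ ≤ (‖α‖ + ‖β‖ * ρ) * N ^ min n N * (1 / 2) ^ n := by
        gcongr ?_ * _
        exact norm_solCoeff_mul_pow_le hρ hN₁ hpartial n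
    _ ≤ (‖α‖ + ‖β‖ * ρ) * N ^ N * (1 / 2) ^ n := by
        gcongr
        exact min_le_right n N

theorem differentiable_solCoeff_param (c : ℕ → ℂ) (α β : ℂ) (n : ℕ) :
    Differentiable ℂ fun l => solCoeff c l α β n := by
  induction n using Nat.strong_induction_on with
  | _ n ih =>
    match n with
    | 0 => simp only [solCoeff]; fun_prop
    | 1 => simp only [solCoeff]; fun_prop
    | n + 2 =>
      simp only [solCoeff]
      have hsum : Differentiable ℂ fun l =>
          ∑ k : Fin (n + 1), solCoeff c l α β k * c (n - k) :=
        .fun_sum fun k _ => (ih k (k.isLt.trans (Nat.lt_succ_self _))).mul_const _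
      exact ((differentiable_id.mul (ih n (by omega))).add hsum).div_const _

/-- The power series in `w` with coefficients `solCoeff c l α β`. -/
noncomputable def solSeries (c : ℕ → ℂ) (α β w l : ℂ) : ℂ :=
  ∑' n, solCoeff c l α β n * w ^ n

theorem summable_solCoeff (hc : ∀ w : ℂ, Summable fun n => c n * w ^ n) (l α β w : ℂ) :
    Summable fun n => solCoeff c l α β n * w ^ n := by
  obtain ⟨b, hb, hle⟩ := exists_summable_bound_solCoeff hc α β ‖l‖ w
  exact .of_norm_bounded hb (hle l le_rfl)

theorem differentiable_solSeries_param (hc : ∀ w : ℂ, Summable fun n => c n * w ^ n)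
    (α β w : ℂ) : Differentiable ℂ (solSeries c α β w) := by
  intro l
  obtain ⟨b, hb, hle⟩ := exists_summable_bound_solCoeff hc α β (‖l‖ + 1) w
  refine (differentiableOn_tsum_of_summable_norm hb (fun n =>
    ((differentiable_solCoeff_param c α β n).mul_const _).differentiableOn) Metric.isOpen_ball
    fun n l' hl' => hle l' (mem_ball_zero_iff.1 hl').le n).differentiableAt
    (Metric.isOpen_ball.mem_nhds ?_)
  simp

theorem hasSum_solCoeff_second_derivative {l α β w v : ℂ}
    (hc : ∀ w : ℂ, Summable fun n => c n * w ^ n) (hv : HasSum (fun n => c n * w ^ n) v) :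
    HasSum (fun n : ℕ => (n + 1) * ((n + 1 + 1) * solCoeff c l α β (n + 1 + 1)) * w ^ n)
      ((v + l) * solSeries c α β w l) := by
  have ha := summable_solCoeff hc l α β w
  have hcauchy : HasSum (fun n => (∑ k ∈ Finset.range (n + 1),
      solCoeff c l α β k * c (n - k)) * w ^ n) (solSeries c α β w l * v) := by
    rw [← hv.tsum_eq, solSeries]
    refine (hasSum_sum_range_mul_of_summable_norm ha.norm hv.summable.norm).congr_fun fun n => ?_
    rw [Finset.sum_mul]
    refine Finset.sum_congr rfl fun k hk => ?_
    rw [← pow_mul_pow_sub w (Finset.mem_range_succ_iff.1 hk)]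
    ring
  have hsum := (ha.hasSum.mul_left l).add hcauchy
  rw [← solSeries, mul_comm _ v, ← add_mul, add_comm] at hsum
  refine hsum.congr_fun fun n => ?_
  linear_combination w ^ n * solCoeff_add_two c l α β n

theorem isSolutionOn_solSeries {z₀ : ℂ} (hV : ∀ w, HasSum (fun n => c n * w ^ n) (V (z₀ + w)))
    (l α β : ℂ) :
    IsSolutionOn univ 0 (fun z => V z + l) fun z => solSeries c α β (z - z₀) l := by
  have ha := summable_solCoeff (fun w => (hV w).summable) l α β
  refine .of_hasDerivAt isOpen_univ (u' := fun z => ∑' n : ℕ,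
    (n + 1) * solCoeff c l α β (n + 1) * (z - z₀) ^ n) (fun z _ => ?_) fun z _ => ?_
  · exact (hasDerivAt_tsum_mul_pow ha (z - z₀)).comp_sub_const z z₀
  · have h := (hasDerivAt_tsum_mul_pow (summable_derivCoeff ha) (z - z₀)).comp_sub_const z z₀
    have hsum := hasSum_solCoeff_second_derivative (l := l) (α := α) (β := β)
      (fun w => (hV w).summable) (hV (z - z₀))
    rw [add_sub_cancel] at hsum
    simpa only [zero_mul, zero_add, ← hsum.tsum_eq, Nat.cast_add, Nat.cast_one] using h

theorem deriv_solSeries_zero (hc : ∀ w : ℂ, Summable fun n => c n * w ^ n) (l α β : ℂ) :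
    deriv (fun w => solSeries c α β w l) 0 = β := by
  refine (hasDerivAt_tsum_mul_pow (summable_solCoeff hc l α β) 0).deriv.trans ?_
  rw [tsum_eq_single 0 fun n hn => by rw [zero_pow hn, mul_zero]]
  simp [solCoeff]

theorem solSeries_zero (c : ℕ → ℂ) (l α β : ℂ) : solSeries c α β 0 l = α := by
  rw [solSeries, tsum_eq_single 0 fun n hn => by rw [zero_pow hn, mul_zero]]
  simp [solCoeff]

theorem exists_entire_solution_family (hV : Differentiable ℂ V) (z₀ : ℂ) {α β : ℂ → ℂ}
    (hα : DifferentiableOn ℂ α B) (hβ : DifferentiableOn ℂ β B) :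
    ∃ φ : ℂ → ℂ → ℂ, (∀ l, IsSolutionOn univ 0 (fun z => V z + l) (fun z => φ z l)) ∧
      (∀ l, φ z₀ l = α l ∧ deriv (fun z => φ z l) z₀ = β l) ∧
      ∀ z, DifferentiableOn ℂ (φ z) B := by
  set c : ℕ → ℂ := fun n => (n.factorial : ℂ)⁻¹ * iteratedDeriv n V z₀
  have hc (w : ℂ) : HasSum (fun n => c n * w ^ n) (V (z₀ + w)) := by
    have h := hasSum_taylorSeries_of_entire hV z₀ (z₀ + w)
    simp only [add_sub_cancel_left, smul_eq_mul] at h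
    exact h.congr_fun fun n => by ring
  have hsummable (w : ℂ) : Summable fun n => c n * w ^ n := (hc w).summable
  have hsol := isSolutionOn_solSeries hc
  have hderiv (l α β : ℂ) : HasDerivAt (fun z => solSeries c α β (z - z₀) l) β z₀ := by
    have h := (hsol l α β).hasDerivAt isOpen_univ (mem_univ z₀)
    rwa [deriv_comp_sub_const (f := fun w => solSeries c α β w l), sub_self,
      deriv_solSeries_zero hsummable] at h
  refine ⟨fun z l => α l * solSeries c 1 0 (z - z₀) l + β l * solSeries c 0 1 (z - z₀) l,
    fun l => (hsol l 1 0).linear_combination (hsol l 0 1) isOpen_univ (α l) (β l),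
    fun l => ⟨?_, ?_⟩, fun z => ?_⟩
  · simp only [sub_self, solSeries_zero, mul_one, mul_zero, add_zero]
  · refine (((hderiv l 1 0).const_mul (α l)).add ((hderiv l 0 1).const_mul (β l))).deriv.trans ?_
    rw [mul_zero, zero_add, mul_one]
  · exact (hα.mul (differentiable_solSeries_param hsummable 1 0 _).differentiableOn).add
      (hβ.mul (differentiable_solSeries_param hsummable 0 1 _).differentiableOn)

end PowerSeries

section ShiftedSector

/-- The open sector with vertex `ρ`, symmetric about the real ray `(ρ, ∞)`, whose half-opening
angle has cosine `-κ`. -/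
def shiftedSector (κ ρ : ℝ) : Set ℂ :=
  {η | -κ * ‖η - ρ‖ < (η - ρ).re}

variable {κ ρ c s x : ℝ} {η : ℂ}

theorem mem_shiftedSector : η ∈ shiftedSector κ ρ ↔ -κ * ‖η - ρ‖ < η.re - ρ := by
  simp only [shiftedSector, mem_ofPred_eq, sub_re, ofReal_re]

theorem isOpen_shiftedSector (κ ρ : ℝ) : IsOpen (shiftedSector κ ρ) :=
  isOpen_lt (by fun_prop) (by fun_prop)

theorem shiftStable_shiftedSector (hκ₀ : 0 ≤ κ) (hκ₁ : κ ≤ 1) (ρ : ℝ) :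
    ShiftStable (shiftedSector κ ρ) := by
  intro η hη s hs
  rw [mem_shiftedSector] at hη ⊢
  have hnorm : ‖η - ρ‖ ≤ ‖η + s - ρ‖ + s := by
    calc ‖η - ρ‖ = ‖η + s - ρ - s‖ := by ring_nf
      _ ≤ ‖η + s - ρ‖ + ‖(s : ℂ)‖ := norm_sub_le _ _
      _ = ‖η + s - ρ‖ + s := by rw [norm_real, Real.norm_of_nonneg hs]
  rw [add_re, ofReal_re]
  nlinarith

theorem neg_mul_norm_lt_re (hκ₀ : 0 ≤ κ) (hκ₁ : κ ≤ 1) (hρ : 0 ≤ ρ) (hη : η ∈ shiftedSector κ ρ) :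
    -κ * ‖η‖ < η.re := by
  rw [mem_shiftedSector] at hη
  have hnorm : ‖η - ρ‖ ≤ ‖η‖ + ρ := by
    simpa only [norm_real, Real.norm_of_nonneg hρ] using norm_sub_le η (ρ : ℂ)
  nlinarith

theorem norm_add_ofReal_ge (hκ₀ : 0 ≤ κ) (hκ₁ : κ ≤ 1) (hη : -κ * ‖η‖ ≤ η.re) (hs : 0 ≤ s) :
    (1 - κ) / 2 * (‖η‖ + s) ≤ ‖η + s‖ := by
  refine le_of_sq_le_sq ?_ (norm_nonneg _)
  have hsq : ‖η + s‖ ^ 2 = ‖η‖ ^ 2 + 2 * s * η.re + s ^ 2 := by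
    simp only [Complex.sq_norm, normSq_apply, add_re, add_im, ofReal_re, ofReal_im]
    ring
  calc ((1 - κ) / 2 * (‖η‖ + s)) ^ 2 = ((1 - κ) / 2) ^ 2 * (‖η‖ + s) ^ 2 := mul_pow _ _ 2
    _ ≤ (1 - κ) / 2 * (‖η‖ + s) ^ 2 := by gcongr; nlinarith
    _ ≤ ‖η‖ ^ 2 - 2 * s * (κ * ‖η‖) + s ^ 2 := by
      nlinarith [mul_nonneg (add_nonneg zero_le_one hκ₀) (sq_nonneg (‖η‖ - s))]
    _ ≤ ‖η + s‖ ^ 2 := by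
      rw [hsq]
      nlinarith [mul_le_mul_of_nonneg_left hη hs]

theorem norm_ge_of_mem_shiftedSector (hκ₀ : 0 ≤ κ) (hκ₁ : κ ≤ 1) (hρ : 0 ≤ ρ)
    (hη : η ∈ shiftedSector κ ρ) : (1 - κ) / 2 * ρ ≤ ‖η‖ := by
  have hcentre : -κ * ‖η - ρ‖ ≤ (η - ρ).re := le_of_lt hη
  have h := norm_add_ofReal_ge hκ₀ hκ₁ hcentre hρ
  rw [sub_add_cancel] at h
  refine le_trans ?_ h
  exact mul_le_mul_of_nonneg_left (le_add_of_nonneg_left (norm_nonneg _)) (by linarith)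

theorem shiftedSector_subset_slitPlane (hκ₀ : 0 ≤ κ) (hκ₁ : κ ≤ 1) (hρ : 0 ≤ ρ) :
    shiftedSector κ ρ ⊆ slitPlane := by
  intro η hη
  have h := neg_mul_norm_lt_re hκ₀ hκ₁ hρ hη
  rw [mem_slitPlane_iff]
  by_contra! ⟨hre, him⟩
  have hnorm : ‖η‖ = -η.re := by
    rw [← abs_re_eq_norm.2 him, abs_of_nonpos hre]
  rw [hnorm] at h
  nlinarith

theorem mem_shiftedSector_of_lt_norm (hκ₀ : 0 ≤ κ) (hρ : 0 ≤ ρ) (hre : -c * ‖η‖ ≤ η.re)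
    (hnorm : (1 + κ) * ρ < (κ - c) * ‖η‖) : η ∈ shiftedSector κ ρ := by
  rw [mem_shiftedSector]
  have hsub : ‖η‖ - ρ ≤ ‖η - ρ‖ := by
    simpa only [norm_real, Real.norm_of_nonneg hρ] using norm_sub_norm_le η (ρ : ℂ)
  nlinarith

theorem eventually_mem_shiftedSector (hκ₀ : 0 ≤ κ) (hρ : 0 ≤ ρ) {θ : ℝ} (hθ : -κ < Real.cos θ) :
    ∀ᶠ x : ℝ in atTop, exp (θ * I) * x ∈ shiftedSector κ ρ := by
  have hκθ : 0 < κ + Real.cos θ := by linarith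
  filter_upwards [eventually_ge_atTop 0, eventually_gt_atTop ((1 + κ) * ρ / (κ + Real.cos θ))]
    with x hx hlarge
  have hnorm : ‖exp (θ * I) * x‖ = x := by
    rw [norm_mul, norm_exp_ofReal_mul_I, norm_real, one_mul, Real.norm_of_nonneg hx]
  refine mem_shiftedSector_of_lt_norm (c := -Real.cos θ) hκ₀ hρ ?_ ?_
  · rw [hnorm, re_mul_ofReal, exp_ofReal_mul_I_re, neg_neg]
  · rwa [hnorm, sub_neg_eq_add, mul_comm (κ + _), ← div_lt_iff₀ hκθ]

theorem eventually_ofReal_mem_shiftedSector (hκ₀ : 0 ≤ κ) (hρ : 0 ≤ ρ) :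
    ∀ᶠ x : ℝ in atTop, (x : ℂ) ∈ shiftedSector κ ρ := by
  have hcos : -κ < Real.cos 0 := by
    rw [Real.cos_zero]
    linarith
  simpa using eventually_mem_shiftedSector hκ₀ hρ hcos

theorem isPreconnected_shiftedSector (hκ₀ : 0 ≤ κ) (hκ₁ : κ ≤ 1) (ρ : ℝ) :
    IsPreconnected (shiftedSector κ ρ) := by
  have hcentre : ((ρ : ℂ) + 1) ∈ shiftedSector κ ρ := by
    rw [mem_shiftedSector, add_sub_cancel_left, norm_one, add_re, ofReal_re, one_re]
    linarith
  have hstar : StarConvex ℝ ((ρ : ℂ) + 1) (shiftedSector κ ρ) := by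
    intro η hη a b ha hb hab
    rcases hb.eq_or_lt with rfl | hb
    · rwa [(by linarith : a = 1), one_smul, zero_smul, add_zero]
    have hdilate : (ρ : ℂ) + b * (η - ρ) ∈ shiftedSector κ ρ := by
      rw [mem_shiftedSector] at hη ⊢
      rw [add_sub_cancel_left, norm_mul, norm_real, Real.norm_of_nonneg hb.le, add_re, ofReal_re,
        re_ofReal_mul, sub_re, ofReal_re]
      nlinarith
    have ha' : (a : ℂ) = 1 - b := by exact_mod_cast eq_sub_of_add_eq hab
    have hcomb : a • ((ρ : ℂ) + 1) + b • η = ρ + b * (η - ρ) + a := by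
      rw [real_smul, real_smul, ha']
      ring
    rw [hcomb]
    exact shiftStable_shiftedSector hκ₀ hκ₁ ρ _ hdilate a ha
  exact (hstar.isPathConnected hcentre).isConnected.isPreconnected

end ShiftedSector

section LiouvilleGreen

/-- `f` divided by its Liouville–Green approximation `z ^ (-3/4) * exp (-2/5 * z ^ (5/2))`, in the
variable `w = 5/2 * log z`, which makes it an entire function. -/
noncomputable def lgLift (f : ℂ → ℂ) (w : ℂ) : ℂ :=
  f (exp (2 / 5 * w)) * exp (3 / 10 * w) * exp (2 / 5 * exp w)

/-- The Liouville–Green transform of `f`, in the variable `η = exp (-θ * I) * z ^ (5/2)` which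
follows the ray `arg z = 2/5 * θ`. -/
noncomputable def lgTransform (f : ℂ → ℂ) (θ : ℝ) (η : ℂ) : ℂ :=
  lgLift f (log η + θ * I)

/-- The coefficient `μ` of the equation `u'' = μ u' + q u` satisfied by Liouville–Green
transforms. -/
noncomputable def lgExponent (θ : ℝ) : ℂ :=
  4 / 5 * exp (θ * I)

/-- The coefficient `q` of the equation `u'' = μ u' + q u` satisfied by the Liouville–Green
transforms of solutions of `f'' = (z ^ 3 + l) f`. -/
noncomputable def lgPotential (θ : ℝ) (η l : ℂ) : ℂ :=
  (4 / 25 * l * exp (4 / 5 * (log η + θ * I)) - 21 / 100) / η ^ 2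

variable {f : ℂ → ℂ} {η l z : ℂ} {θ : ℝ}

theorem hasDerivAt_lgLift (hf : Differentiable ℂ f) (w : ℂ) :
    HasDerivAt (lgLift f) (2 / 5 * lgLift (fun z => z * deriv f z) w +
      (3 / 10 + 2 / 5 * exp w) * lgLift f w) w := by
  have hexp (c : ℂ) : HasDerivAt (fun w => exp (c * w)) (exp (c * w) * c) w := by
    simpa using ((hasDerivAt_id w).const_mul c).cexp
  have hf' := (hf (exp (2 / 5 * w))).hasDerivAt.comp w (hexp (2 / 5))
  refine ((hf'.mul (hexp (3 / 10))).mul ((hasDerivAt_exp w).const_mul (2 / 5)).cexp).congr_deriv ?_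
  simp only [lgLift, Function.comp_apply, Pi.mul_apply]
  ring

theorem hasDerivAt_deriv_lgLift (hf : IsSolutionOn univ 0 (fun z => z ^ 3 + l) f) (w : ℂ) :
    HasDerivAt (deriv (lgLift f)) ((1 + 4 / 5 * exp w) * deriv (lgLift f) w +
      (4 / 25 * l * exp (4 / 5 * w) - 21 / 100) * lgLift f w) w := by
  have hdiff : Differentiable ℂ f := differentiableOn_univ.1 hf.differentiableOn
  have hG := hasDerivAt_lgLift hdiff
  have hEuler (z : ℂ) : HasDerivAt (fun z => z * deriv f z)
      (deriv f z + z * ((z ^ 3 + l) * f z)) z := by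
    refine ((hasDerivAt_id z).mul (hf.hasDerivAt_deriv isOpen_univ (mem_univ z))).congr_deriv ?_
    rw [one_mul, zero_mul, zero_add, id]
  have hH := hasDerivAt_lgLift (fun z => (hEuler z).differentiableAt) w
  have hEulerSq : lgLift (fun z => z * deriv (fun z => z * deriv f z) z) w =
      lgLift (fun z => z * deriv f z) w + (exp w ^ 2 + l * exp (4 / 5 * w)) * lgLift f w := by
    have hz₅ : exp w ^ 2 = exp (2 / 5 * w) ^ 5 := by
      rw [← exp_nat_mul, ← exp_nat_mul]
      ring_nf
    have hz₂ : exp (4 / 5 * w) = exp (2 / 5 * w) ^ 2 := by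
      rw [← exp_nat_mul]
      ring_nf
    simp only [lgLift, (hEuler _).deriv, hz₅, hz₂]
    ring
  rw [funext fun w => (hG w).deriv]
  refine ((hH.const_mul (2 / 5)).add
    ((((hasDerivAt_exp w).const_mul (2 / 5)).const_add (3 / 10)).mul (hG w))).congr_deriv ?_
  rw [hEulerSq]
  ring

theorem hasDerivAt_lgTransform (hf : Differentiable ℂ f) (θ : ℝ) (hη : η ∈ slitPlane) :
    HasDerivAt (lgTransform f θ) (deriv (lgLift f) (log η + θ * I) / η) η :=
  (hasDerivAt_lgLift hf _).differentiableAt.hasDerivAt.comp η ((hasDerivAt_log hη).add_const _)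

theorem isSolutionOn_lgTransform (hf : IsSolutionOn univ 0 (fun z => z ^ 3 + l) f) (θ : ℝ) :
    IsSolutionOn slitPlane (lgExponent θ) (fun η => lgPotential θ η l) (lgTransform f θ) := by
  refine .of_hasDerivAt isOpen_slitPlane
    (fun η => hasDerivAt_lgTransform (differentiableOn_univ.1 hf.differentiableOn) θ)
    fun η hη => ?_
  have hη₀ : η ≠ 0 := slitPlane_ne_zero hη
  have hw : HasDerivAt (fun η => log η + θ * I) η⁻¹ η := (hasDerivAt_log hη).add_const _
  refine (((hasDerivAt_deriv_lgLift hf _).comp η hw).div (hasDerivAt_id η) hη₀).congr_deriv ?_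
  simp only [exp_add, exp_log hη₀, lgExponent, lgPotential, lgTransform, Function.comp_apply, id]
  field_simp
  ring

/-- Linearity in `(a, b)` carries holomorphic dependence on a parameter over from the jet of the
transform to the jet of `f`. -/
theorem exists_lgTransform_jet (θ : ℝ) (hη : η ∈ slitPlane) :
    ∃ z₀ P S T : ℂ, ∀ f : ℂ → ℂ, Differentiable ℂ f → ∀ a b : ℂ,
      f z₀ = P * a → deriv f z₀ = S * b + T * a →
      lgTransform f θ η = a ∧ deriv (lgTransform f θ) η = b := by
  set w := log η + θ * I
  set E := exp (3 / 10 * w) * exp (2 / 5 * exp w)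
  have hE : E ≠ 0 := mul_ne_zero (exp_ne_zero _) (exp_ne_zero _)
  have hη₀ : η ≠ 0 := slitPlane_ne_zero hη
  refine ⟨exp (2 / 5 * w), E⁻¹, 5 / 2 * η / (exp (2 / 5 * w) * E),
    -(5 / 2) * (3 / 10 + 2 / 5 * exp w) / (exp (2 / 5 * w) * E), fun f hf a b ha hb => ?_⟩
  have hlift (g : ℂ → ℂ) : lgLift g w = g (exp (2 / 5 * w)) * E := mul_assoc _ _ _
  refine ⟨?_, ?_⟩
  · rw [lgTransform, hlift, ha]
    field_simp
  · rw [(hasDerivAt_lgTransform hf θ hη).deriv, (hasDerivAt_lgLift hf w).deriv, hlift, hlift, ha,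
      hb]
    field_simp
    ring

theorem lgTransform_eq_lgTransform_zero (f : ℂ → ℂ) (hθ : |θ| < Real.pi / 2) (hη : 0 < η.re) :
    lgTransform f θ η = lgTransform f 0 (exp (θ * I) * η) := by
  have hη₀ : η ≠ 0 := by
    rintro rfl
    simp at hη
  have harg : |arg η| < Real.pi / 2 := abs_arg_lt_pi_div_two_iff.2 (.inl hη)
  rw [abs_lt] at hθ harg
  have him : (θ * I + log η).im = θ + arg η := by simp [log_im]
  have hlog : log (exp (θ * I) * η) = θ * I + log η := by
    conv_lhs => rw [← exp_log hη₀, ← exp_add]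
    apply log_exp <;> linarith
  rw [lgTransform, lgTransform, hlog, ofReal_zero, zero_mul, add_zero, add_comm]

theorem lgTransform_exp (f : ℂ → ℂ) (hz : z ≠ 0) (hθ : |5 / 2 * arg z - θ| < Real.pi) :
    lgTransform f θ (exp (5 / 2 * log z - θ * I)) =
      f z * z ^ ((3 : ℂ) / 4) * exp (2 / 5 * z ^ ((5 : ℂ) / 2)) := by
  have him : (5 / 2 * log z - θ * I).im = 5 / 2 * arg z - θ := by
    simp [log_im]
  rw [abs_lt, ← him] at hθ
  have h₁ : 2 / 5 * (5 / 2 * log z) = log z := by ring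
  have h₂ : 3 / 10 * (5 / 2 * log z) = log z * (3 / 4) := by ring
  rw [lgTransform, log_exp hθ.1 hθ.2.le, sub_add_cancel, lgLift, h₁, h₂, exp_log hz,
    mul_comm (5 / 2) (log z), ← cpow_def_of_ne_zero hz, ← cpow_def_of_ne_zero hz]

theorem norm_lgPotential_le {A : ℝ} (hη : 1 ≤ ‖η‖) (hl : ‖l‖ ≤ A) :
    ‖lgPotential θ η l‖ ≤ (A + 1) * ‖η‖ ^ (-(1 / 5 + 1) : ℝ) := by
  have hη₀ : 0 < ‖η‖ := one_pos.trans_le hη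
  have hpow : ‖exp (4 / 5 * (log η + θ * I))‖ = ‖η‖ ^ (4 / 5 : ℝ) := by
    rw [norm_exp, Real.rpow_def_of_pos hη₀]
    simp [log_re, mul_comm]
  have hnum : ‖4 / 25 * l * exp (4 / 5 * (log η + θ * I)) - 21 / 100‖ ≤
      (A + 1) * ‖η‖ ^ (4 / 5 : ℝ) := by
    have hone : 1 ≤ ‖η‖ ^ (4 / 5 : ℝ) := Real.one_le_rpow hη (by norm_num)
    calc ‖4 / 25 * l * exp (4 / 5 * (log η + θ * I)) - 21 / 100‖
        ≤ 4 / 25 * ‖l‖ * ‖η‖ ^ (4 / 5 : ℝ) + 21 / 100 := by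
          refine (norm_sub_le _ _).trans_eq ?_
          rw [norm_mul, norm_mul, hpow]
          norm_num
      _ ≤ 1 * A * ‖η‖ ^ (4 / 5 : ℝ) + 1 * ‖η‖ ^ (4 / 5 : ℝ) := by
          gcongr <;> linarith
      _ = (A + 1) * ‖η‖ ^ (4 / 5 : ℝ) := by ring
  rw [lgPotential, norm_div, norm_pow]
  refine (div_le_div_of_nonneg_right hnum (by positivity)).trans_eq ?_
  rw [← Real.rpow_natCast, mul_div_assoc, ← Real.rpow_sub hη₀]
  norm_num

theorem differentiableAt_lgPotential (θ : ℝ) (l : ℂ) (hη : η ∈ slitPlane) :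
    DifferentiableAt ℂ (fun η => lgPotential θ η l) η := by
  have hη₀ : η ^ 2 ≠ 0 := pow_ne_zero 2 (slitPlane_ne_zero hη)
  have hexp : DifferentiableAt ℂ (fun η => exp (4 / 5 * (log η + θ * I))) η := by
    fun_prop (disch := assumption)
  exact ((hexp.const_mul _).sub_const _).div (differentiableAt_pow 2) hη₀

theorem differentiable_lgPotential_param (θ : ℝ) (η : ℂ) : Differentiable ℂ (lgPotential θ η) := by
  unfold lgPotential
  fun_prop

theorem lgExponent_re_pos (hθ : |θ| < Real.pi / 2) : 0 < (lgExponent θ).re := by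
  have hcos : 0 < Real.cos θ := Real.cos_pos_of_mem_Ioo (abs_lt.1 hθ)
  have hre : (lgExponent θ).re = 4 / 5 * Real.cos θ := by
    simp [lgExponent, exp_ofReal_mul_I_re]
  rw [hre]
  positivity

theorem norm_lgExponent (θ : ℝ) : ‖lgExponent θ‖ = 4 / 5 := by
  rw [lgExponent, norm_mul, norm_exp_ofReal_mul_I]
  norm_num

theorem exists_volterraData_lgPotential (hθ : |θ| < Real.pi / 2) {κ A : ℝ} (hκ₀ : 0 ≤ κ)
    (hκ₁ : κ < 1) (hA : 0 ≤ A) : ∃ ρ > 0, ∃ M r : ℝ, VolterraData (shiftedSector κ ρ)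
      (Metric.ball 0 A) (lgPotential θ) (lgExponent θ) (1 / 5) M r := by
  set c := (1 - κ) / 2
  have hc : 0 < c := half_pos (sub_pos.2 hκ₁)
  set M := 5 * (A + 1) * c ^ (-(1 / 5 + 1) : ℝ)
  have hM : 0 ≤ M := by positivity
  have hlim : Tendsto (fun r : ℝ => 8 * M * r ^ (-(1 / 5) : ℝ)) atTop (𝓝 0) := by
    simpa using (tendsto_rpow_neg_atTop (y := 1 / 5) (by norm_num)).const_mul (8 * M)
  obtain ⟨r, hcontr, hr⟩ := ((hlim.eventually_le_const (by norm_num : (0 : ℝ) < 4 / 5)).and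
    (eventually_ge_atTop 1)).exists
  have hρ : 0 < r / c := by positivity
  have hnorm (η : ℂ) (hη : η ∈ shiftedSector κ (r / c)) : r ≤ ‖η‖ := by
    simpa only [c, mul_div_cancel₀ _ hc.ne'] using
      norm_ge_of_mem_shiftedSector hκ₀ hκ₁.le hρ.le hη
  have hshift := shiftStable_shiftedSector hκ₀ hκ₁.le (r / c)
  refine ⟨r / c, hρ, M, r, isOpen_shiftedSector _ _, Metric.isOpen_ball, hshift,
    fun l _ η hη => ?_, fun η _ => ?_, by norm_num, hM, by linarith, hnorm,
    fun η hη l hl s hs => ?_, lgExponent_re_pos hθ, by rwa [norm_lgExponent]⟩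
  · have hslit := shiftedSector_subset_slitPlane hκ₀ hκ₁.le hρ.le hη
    exact (differentiableAt_lgPotential θ l hslit).differentiableWithinAt
  · exact (differentiable_lgPotential_param θ η).differentiableOn
  · have hη₀ : 0 < ‖η‖ := by linarith [hnorm η hη]
    have hlow : c * (‖η‖ + s) ≤ ‖η + s‖ :=
      norm_add_ofReal_ge hκ₀ hκ₁.le (neg_mul_norm_lt_re hκ₀ hκ₁.le hρ.le hη).le hs
    calc ‖lgPotential θ (η + s) l‖ ≤ (A + 1) * ‖η + s‖ ^ (-(1 / 5 + 1) : ℝ) :=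
          norm_lgPotential_le (hr.trans (hnorm _ (hshift η hη s hs))) (mem_ball_zero_iff.1 hl).le
      _ ≤ (A + 1) * (c * (‖η‖ + s)) ^ (-(1 / 5 + 1) : ℝ) := by
        gcongr (A + 1) * ?_
        exact Real.rpow_le_rpow_of_nonpos (by positivity) hlow (by norm_num)
      _ = M * (1 / 5) * (‖η‖ + s) ^ (-(1 / 5 + 1) : ℝ) := by
        rw [Real.mul_rpow hc.le (by positivity)]
        ring

end LiouvilleGreen

section Recessive

/-- `f` is the solution of `f'' = (z ^ 3 + l) f` whose Liouville–Green transforms tend to `1` along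
all rays `arg z = 2/5 * θ` of the sector `|arg z| < π / 5`, with bounded derivative. -/
structure IsRecessive (l : ℂ) (f : ℂ → ℂ) : Prop where
  isSolutionOn : IsSolutionOn univ 0 (fun z => z ^ 3 + l) f
  tendsto_lgTransform : ∀ θ : ℝ, |θ| < Real.pi / 2 →
    Tendsto (fun x : ℝ => lgTransform f θ x) atTop (𝓝 1)
  isBigO_deriv_lgTransform : ∀ θ : ℝ, |θ| < Real.pi / 2 →
    (fun x : ℝ => deriv (lgTransform f θ) x) =O[atTop] fun _ => (1 : ℝ)

variable {f g : ℂ → ℂ} {η l z : ℂ} {θ κ ρ A M r : ℝ} {B : Set ℂ}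

theorem IsRecessive.differentiable (hf : IsRecessive l f) : Differentiable ℂ f :=
  differentiableOn_univ.1 hf.isSolutionOn.differentiableOn

theorem IsRecessive.eqOn_volterraSolution (hf : IsRecessive l f) (hθ : |θ| < Real.pi / 2)
    (hκ₀ : 0 ≤ κ) (hκ₁ : κ < 1) (hρ : 0 ≤ ρ) (hl : l ∈ B)
    (D : VolterraData (shiftedSector κ ρ) B (lgPotential θ) (lgExponent θ) (1 / 5) M r) :
    EqOn (lgTransform f θ) (fun η => volterraSolution (lgExponent θ) (lgPotential θ) η l)
      (shiftedSector κ ρ) :=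
  D.eqOn_volterraSolution_of_tendsto_one (isPreconnected_shiftedSector hκ₀ hκ₁.le ρ)
    (eventually_ofReal_mem_shiftedSector hκ₀ hρ) hl
    ((isSolutionOn_lgTransform hf.isSolutionOn θ).mono
      (shiftedSector_subset_slitPlane hκ₀ hκ₁.le hρ))
    (hf.tendsto_lgTransform θ hθ) (hf.isBigO_deriv_lgTransform θ hθ)

theorem eq_of_lgTransform_eventuallyEq (hf : Differentiable ℂ f) (hg : Differentiable ℂ g)
    (hη : η ∈ slitPlane) (h : lgTransform f θ =ᶠ[𝓝 η] lgTransform g θ) : f = g := by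
  have hz : HasStrictDerivAt (fun η => exp (2 / 5 * (log η + θ * I)))
      (exp (2 / 5 * (log η + θ * I)) * (2 / 5 * η⁻¹)) η :=
    (((hasStrictDerivAt_log hη).add_const _).const_mul (2 / 5)).cexp
  have hz' : exp (2 / 5 * (log η + θ * I)) * (2 / 5 * η⁻¹) ≠ 0 :=
    mul_ne_zero (exp_ne_zero _)
      (mul_ne_zero (by norm_num) (inv_ne_zero (slitPlane_ne_zero hη)))
  have hfg : f =ᶠ[𝓝 (exp (2 / 5 * (log η + θ * I)))] g := by
    rw [← hz.map_nhds_eq hz']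
    refine eventually_map.2 (h.mono fun ζ hζ => ?_)
    exact mul_right_cancel₀ (exp_ne_zero _) (mul_right_cancel₀ (exp_ne_zero _) hζ)
  exact (hf.differentiableOn.analyticOnNhd isOpen_univ).eq_of_eventuallyEq
    (hg.differentiableOn.analyticOnNhd isOpen_univ) hfg

theorem IsRecessive.unique (hf : IsRecessive l f) (hg : IsRecessive l g) : f = g := by
  have hθ : |(0 : ℝ)| < Real.pi / 2 := by simpa using Real.pi_pos
  obtain ⟨ρ, hρ, M, r, D⟩ := exists_volterraData_lgPotential hθ (le_refl (0 : ℝ)) one_pos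
    (by positivity : 0 ≤ ‖l‖ + 1)
  have hl : l ∈ Metric.ball 0 (‖l‖ + 1) := by simp
  obtain ⟨x, hx⟩ := (eventually_ofReal_mem_shiftedSector (le_refl (0 : ℝ)) hρ.le).exists
  refine eq_of_lgTransform_eventuallyEq hf.differentiable hg.differentiable
    (shiftedSector_subset_slitPlane le_rfl zero_le_one hρ.le hx) (θ := 0) ?_
  exact ((hf.eqOn_volterraSolution hθ le_rfl one_pos hρ.le hl D).trans
    (hg.eqOn_volterraSolution hθ le_rfl one_pos hρ.le hl D).symm).eventuallyEq_of_mem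
      (D.isOpen_domain.mem_nhds hx)

theorem deriv_lgTransform_eq (f : ℂ → ℂ) (hθ : |θ| < Real.pi / 2) (hη : 0 < η.re) :
    deriv (lgTransform f θ) η = exp (θ * I) * deriv (lgTransform f 0) (exp (θ * I) * η) := by
  have h : lgTransform f θ =ᶠ[𝓝 η] fun η => lgTransform f 0 (exp (θ * I) * η) := by
    filter_upwards [(isOpen_lt continuous_const continuous_re).mem_nhds hη] with ζ hζ
      using lgTransform_eq_lgTransform_zero f hθ hζ
  rw [h.deriv_eq, deriv_comp_mul_left, smul_eq_mul]

theorem isRecessive_of_eqOn_volterraSolution (hf : IsSolutionOn univ 0 (fun z => z ^ 3 + l) f)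
    (hρ : 0 ≤ ρ) (hl : l ∈ B)
    (D : VolterraData (shiftedSector 0 ρ) B (lgPotential 0) (lgExponent 0) (1 / 5) M r)
    (h : EqOn (lgTransform f 0) (fun η => volterraSolution (lgExponent 0) (lgPotential 0) η l)
      (shiftedSector 0 ρ)) : IsRecessive l f := by
  have hray (θ : ℝ) (hθ : |θ| < Real.pi / 2) :
      ∀ᶠ x : ℝ in atTop, exp (θ * I) * x ∈ shiftedSector 0 ρ :=
    eventually_mem_shiftedSector le_rfl hρ
      (neg_zero.trans_lt (Real.cos_pos_of_mem_Ioo (abs_lt.1 hθ)))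
  refine ⟨hf, fun θ hθ => ?_, fun θ hθ => ?_⟩
  · have hnorm : Tendsto (fun x : ℝ => ‖exp (θ * I) * x‖) atTop atTop := by
      simpa only [norm_mul, norm_exp_ofReal_mul_I, one_mul, norm_real] using
        tendsto_norm_atTop_atTop
    refine (D.tendsto_volterraSolution hnorm (hray θ hθ) hl).congr' ?_
    filter_upwards [hray θ hθ, eventually_gt_atTop 0] with x hmem hx
    rw [lgTransform_eq_lgTransform_zero f hθ (ofReal_re x ▸ hx), h hmem]
  · refine .of_bound (4 / 3 * (M * r ^ (-(1 / 5) : ℝ))) ?_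
    filter_upwards [hray θ hθ, eventually_gt_atTop 0] with x hmem hx
    rw [deriv_lgTransform_eq f hθ (ofReal_re x ▸ hx), norm_mul, norm_exp_ofReal_mul_I, one_mul,
      norm_one, mul_one, h.deriv D.isOpen_domain hmem]
    exact D.norm_deriv_volterraSolution_le hmem hl

theorem exists_isRecessive_of_mem_ball (hA : 0 ≤ A) :
    ∃ φ : ℂ → ℂ → ℂ, (∀ l ∈ Metric.ball 0 A, IsRecessive l (fun z => φ z l)) ∧
      ∀ z, DifferentiableOn ℂ (φ z) (Metric.ball 0 A) := by
  have hθ : |(0 : ℝ)| < Real.pi / 2 := by simpa using Real.pi_pos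
  obtain ⟨ρ, hρ, M, r, D⟩ := exists_volterraData_lgPotential hθ (le_refl (0 : ℝ)) one_pos hA
  obtain ⟨x, hx⟩ := (eventually_ofReal_mem_shiftedSector (le_refl (0 : ℝ)) hρ.le).exists
  have hslit := shiftedSector_subset_slitPlane le_rfl zero_le_one hρ.le
  obtain ⟨z₀, P, S, T, hjet⟩ := exists_lgTransform_jet 0 (hslit hx)
  set u := volterraSolution (lgExponent 0) (lgPotential 0)
  have hval : DifferentiableOn ℂ (u x) (Metric.ball 0 A) :=
    D.isSepHolomorphic_volterraSolution.differentiableOn_param x hx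
  have hder := D.differentiableOn_deriv_volterraSolution_param hx
  obtain ⟨φ, hsol, hinit, hφ⟩ := exists_entire_solution_family (V := fun z => z ^ 3)
    (differentiable_id.pow 3) z₀ (hval.const_mul P)
    ((hder.const_mul S).add (hval.const_mul T))
  refine ⟨φ, fun l hl => isRecessive_of_eqOn_volterraSolution (hsol l) hρ.le hl D ?_, hφ⟩
  obtain ⟨hjet₀, hjet₁⟩ := hjet _ (differentiableOn_univ.1 (hsol l).differentiableOn) _ _
    (hinit l).1 (hinit l).2
  exact (D.isSolutionOn_volterraSolution hl).eqOn_of_jet_eq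
    ((isSolutionOn_lgTransform (hsol l) 0).mono hslit) D.isOpen_domain
    (isPreconnected_shiftedSector le_rfl zero_le_one ρ)
    (fun _ hη => D.volterraSolution_ne_zero hη hl) hx hjet₀ hjet₁

theorem exists_isRecessive_family : ∃ φ : ℂ → ℂ → ℂ,
    (∀ l, IsRecessive l (fun z => φ z l)) ∧ ∀ z, Differentiable ℂ (φ z) := by
  have hlocal (l : ℂ) := exists_isRecessive_of_mem_ball (by positivity : 0 ≤ ‖l‖ + 1)
  have hmem (l : ℂ) : l ∈ Metric.ball 0 (‖l‖ + 1) := by simp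
  choose φ hφ hdiff using hlocal
  refine ⟨fun z l => φ l z l, fun l => hφ l l (hmem l), fun z l => ?_⟩
  have hnhds := Metric.isOpen_ball.mem_nhds (hmem l)
  refine ((hdiff l z).differentiableAt hnhds).congr_of_eventuallyEq ?_
  filter_upwards [hnhds] with l' hl'
    using congr_fun ((hφ l' l' (hmem l')).unique (hφ l l' hl')) z

theorem exp_mem_shiftedSector {δ : ℝ} {w : ℂ} (hκ₀ : 0 ≤ κ) (hρ : 0 ≤ ρ)
    (hw : |w.im| ≤ Real.pi - δ) (hδ : 0 ≤ δ)
    (hlarge : (1 + κ) * ρ < (κ - Real.cos δ) * ‖exp w‖) : exp w ∈ shiftedSector κ ρ := by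
  have hcos : -Real.cos δ ≤ Real.cos w.im := by
    rw [← Real.cos_pi_sub, ← Real.cos_abs w.im]
    exact Real.cos_le_cos_of_nonneg_of_le_pi (abs_nonneg _) (sub_le_self _ hδ) hw
  refine mem_shiftedSector_of_lt_norm hκ₀ hρ ?_ hlarge
  rw [exp_re, norm_exp, mul_comm]
  gcongr

theorem norm_exp_lgVariable (hz : z ≠ 0) (θ : ℝ) :
    ‖exp (5 / 2 * log z - θ * I)‖ = ‖z‖ ^ (5 / 2 : ℝ) := by
  rw [norm_exp, Real.rpow_def_of_pos (norm_pos_iff.2 hz)]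
  simp [log_re, mul_comm]

theorem exists_asymptotic_bound_rotated_sector {δ : ℝ} (hA : 0 ≤ A) (hθ : |θ| < Real.pi / 2)
    (hδ : 0 < δ) (hδ' : δ < Real.pi / 2) :
    ∃ C R : ℝ, ∀ l ∈ Metric.ball (0 : ℂ) A, ∀ f, IsRecessive l f → ∀ z : ℂ,
      R ≤ ‖z‖ → |5 / 2 * arg z - θ| ≤ Real.pi - δ →
      ‖f z * z ^ ((3 : ℂ) / 4) * exp (2 / 5 * z ^ ((5 : ℂ) / 2)) - 1‖ ≤
        C * ‖z‖ ^ (-(1 / 2) : ℝ) := by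
  have hcos₀ : 0 ≤ Real.cos δ := Real.cos_nonneg_of_mem_Icc ⟨by linarith, hδ'.le⟩
  have hcos₁ : Real.cos δ < 1 := by
    simpa using Real.cos_lt_cos_of_nonneg_of_le_pi le_rfl (by linarith) hδ
  obtain ⟨κ, hcosκ, hκ₁⟩ := exists_between hcos₁
  have hκ₀ : 0 ≤ κ := hcos₀.trans hcosκ.le
  obtain ⟨ρ, hρ, M, r, D⟩ := exists_volterraData_lgPotential hθ hκ₀ hκ₁ hA
  have hlarge : Tendsto (fun x : ℝ => (κ - Real.cos δ) * x ^ (5 / 2 : ℝ)) atTop atTop :=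
    (tendsto_rpow_atTop (by norm_num)).const_mul_atTop (sub_pos.2 hcosκ)
  obtain ⟨R, hR⟩ := eventually_atTop.1
    ((hlarge.eventually_gt_atTop ((1 + κ) * ρ)).and (eventually_gt_atTop 0))
  refine ⟨2 * (4 / 3) * M / (4 / 5), R, fun l hl f hf z hz harg => ?_⟩
  obtain ⟨hzlarge, hzpos⟩ := hR ‖z‖ hz
  have hz₀ : z ≠ 0 := norm_pos_iff.1 hzpos
  have hnorm := norm_exp_lgVariable hz₀ θ
  have him : (5 / 2 * log z - θ * I).im = 5 / 2 * arg z - θ := by simp [log_im]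
  have hmem : exp (5 / 2 * log z - θ * I) ∈ shiftedSector κ ρ :=
    exp_mem_shiftedSector hκ₀ hρ.le (him ▸ harg) hδ.le (by rwa [hnorm])
  rw [← lgTransform_exp f hz₀ (harg.trans_lt (sub_lt_self _ hδ)),
    hf.eqOn_volterraSolution hθ hκ₀ hκ₁ hρ.le hl D hmem]
  refine (D.norm_volterraSolution_sub_one_le hmem hl).trans_eq ?_
  rw [norm_lgExponent, hnorm, ← Real.rpow_mul hzpos.le]
  norm_num

theorem exists_asymptotic_bound {ε : ℝ} (hε : 0 < ε) (hA : 0 ≤ A) :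
    ∃ C > 0, ∃ R > 0, ∀ l ∈ Metric.ball (0 : ℂ) A, ∀ f, IsRecessive l f → ∀ z : ℂ,
      R ≤ ‖z‖ → |arg z| ≤ 3 * Real.pi / 5 - ε →
      ‖f z * z ^ ((3 : ℂ) / 4) * exp (2 / 5 * z ^ ((5 : ℂ) / 2)) - 1‖ ≤
        C * ‖z‖ ^ (-(1 / 2) : ℝ) := by
  obtain ⟨δ, hδ, hδmin⟩ := exists_between (lt_min (by positivity : 0 < 5 / 4 * ε)
    Real.pi_div_two_pos)
  obtain ⟨hδε, hδ'⟩ := lt_min_iff.1 hδmin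
  have hθ : |Real.pi / 2 - δ| < Real.pi / 2 := by
    rw [abs_lt]
    constructor <;> linarith
  obtain ⟨C₁, R₁, hupper⟩ := exists_asymptotic_bound_rotated_sector hA hθ hδ hδ'
  obtain ⟨C₂, R₂, hlower⟩ := exists_asymptotic_bound_rotated_sector hA (by rwa [abs_neg]) hδ hδ'
  refine ⟨max 1 (max C₁ C₂), by positivity, max 1 (max R₁ R₂), by positivity,
    fun l hl f hf z hz harg => ?_⟩
  simp only [max_le_iff] at hz
  obtain ⟨hargl, hargu⟩ := abs_le.1 harg
  rcases le_total 0 (arg z) with h | h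
  · refine (hupper l hl f hf z hz.2.1 ?_).trans (by gcongr; simp)
    rw [abs_le]
    constructor <;> linarith
  · refine (hlower l hl f hf z hz.2.2 ?_).trans (by gcongr; simp)
    rw [abs_le]
    constructor <;> linarith

end Recessive

end CubicOscillator

/-- There exists a standard solution family for `f'' = (z³ + λ) f`:
entire in `z` and `λ`, with the Liouville–Green asymptotics
`f(z,λ) = z^{-3/4} e^{-(2/5) z^{5/2}} (1 + O(z^{-1/2}))` in the sector
`|arg z| ≤ 3π/5 - ε`, uniformly for `λ` in compact sets. -/
theorem exists_standard_solution_family :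
    ∃ f : ℂ → ℂ → ℂ,
      (∀ lam : ℂ, Differentiable ℂ (fun z => f z lam) ∧
        ∀ z : ℂ, deriv (deriv (fun w => f w lam)) z = (z ^ 3 + lam) * f z lam) ∧
      (∀ z : ℂ, Differentiable ℂ (fun lam => f z lam)) ∧
      (∀ ε > (0 : ℝ), ∀ L : Set ℂ, IsCompact L →
        ∃ C > (0 : ℝ), ∃ R > (0 : ℝ), ∀ lam ∈ L, ∀ z : ℂ,
          R ≤ ‖z‖ → |Complex.arg z| ≤ 3 * Real.pi / 5 - ε →
          ‖f z lam * z ^ ((3 : ℂ) / 4) *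
              Complex.exp ((2 / 5 : ℂ) * z ^ ((5 : ℂ) / 2)) - 1‖
            ≤ C * ‖z‖ ^ (-(1 / 2) : ℝ)) := by
  obtain ⟨φ, hφ, hparam⟩ := CubicOscillator.exists_isRecessive_family
  refine ⟨φ, fun l => ⟨(hφ l).differentiable, fun z => ?_⟩, hparam, fun ε hε L hL => ?_⟩
  · rw [(hφ l).isSolutionOn.deriv_deriv z (Set.mem_univ z), zero_mul, zero_add]
  · obtain ⟨A, hA, hLA⟩ := hL.isBounded.subset_ball_lt 0 0
    obtain ⟨C, hC, R, hR, hbound⟩ := CubicOscillator.exists_asymptotic_bound hε hA.le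
    exact ⟨C, hC, R, hR, fun l hl => hbound l (hLA hl) _ (hφ l)⟩
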